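/- arXiv:1203.0408 — 3 statements merged into one kernel-verified Lean document; each statement's English description precedes it below -/
import Mathlib

section
/- Let n be even, and the fractional energy minimisation on G = ℤ/n with u(g,h) = 1/δ(g,h) (Lee distance): the minimum of (x|Ax) over x ∈ ℝ^G with (x|x) = (x|𝟙) = n/2 is attained exactly at the characteristic vectors of the two sets S_even = {g even} and S_odd = {g odd}. Consequently S_even and S_odd are the unique minimisers of total energy E_tot among subsets of cardinality n/2. -/
/-!
For an arbitrary finite abelian group and a sign character `ε`, put `z g = ε g * (x g - 1 / 2)`. On
the constraint set `∑ z² = |G| / 4`, and up to a constant the energy of `x` for the kernel `w` is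
the energy of `z` for `w * ε`. The Fourier transform diagonalises the latter, so if the smallest
Fourier coefficient of `w * ε` is attained at the trivial character only, the minimisers are the
`x` for which `z` is constant, i.e. `x = (1 ± ε) / 2`.

On `ℤ/2m` with `w = 1 / δ` and `ε g = (-1) ^ g`, the Fourier coefficients of `w * ε` are values of
`F θ = ∑ j < m, ((-1) ^ j * cos (j * θ) / j + (-1) ^ (j + 1) * cos ((j + 1) * θ) / (j + 1))`. The
derivative telescopes to `F' θ = tan (θ / 2) * (1 - (-1) ^ m * cos (m * θ))`, which is nonnegative
on `(0, π)` and positive near `0`, so `F` has a strict minimum at the trivial character `θ = 0`.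
-/

open Finset ComplexConjugate

section HalfDensity

variable {α : Type*}

/-- For a function `σ` with values `±1`, the indicator function of `{g | σ g = 1}`. -/
noncomputable def signIndicator (σ : α → ℝ) (g : α) : ℝ := (1 + σ g) / 2

lemma indicator_one_coe_inj {S T : Finset α} :
    (S : Set α).indicator (1 : α → ℝ) = (T : Set α).indicator 1 ↔ S = T :=
  ⟨fun h => coe_injective (Set.indicator_one_inj ℝ h), fun h => h ▸ rfl⟩

variable [Fintype α]

/-- The constraint `(x | x) = (x | 𝟙) = |α| / 2`, a relaxation of being the indicator function of a
set containing half of the elements of `α`. -/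
def IsHalfDensity (x : α → ℝ) : Prop :=
  ∑ g, x g * x g = (Fintype.card α : ℝ) / 2 ∧ ∑ g, x g = (Fintype.card α : ℝ) / 2

lemma isHalfDensity_signIndicator {σ : α → ℝ} (hσ : ∀ g, σ g ^ 2 = 1) (hsum : ∑ g, σ g = 0) :
    IsHalfDensity (signIndicator σ) := by
  have idem (g : α) : signIndicator σ g * signIndicator σ g = signIndicator σ g := by
    unfold signIndicator
    linear_combination hσ g / 4
  simp_rw [IsHalfDensity, idem, and_self, signIndicator, ← sum_div, sum_add_distrib, hsum]
  simp

lemma isHalfDensity_indicator {S : Finset α} (hS : (#S : ℝ) = (Fintype.card α : ℝ) / 2) :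
    IsHalfDensity ((S : Set α).indicator 1) := by
  classical
  constructor <;> simp [Set.indicator_apply, hS]

lemma IsHalfDensity.sum_sub_half {x : α → ℝ} (hx : IsHalfDensity x) : ∑ g, (x g - 1 / 2) = 0 := by
  rw [sum_sub_distrib, hx.2]
  simp [div_eq_mul_inv]

end HalfDensity

lemma real_addChar_sq_eq_one {G : Type*} [AddCommGroup G] [Finite G]
    (ε : AddChar G ℝ) (g : G) : ε g ^ 2 = 1 := by
  rw [← sq_abs, ← Real.norm_eq_abs, AddChar.norm_apply, one_pow]

section FiniteAbelianGroup

variable {G : Type*} [AddCommGroup G] [Fintype G]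

/-- The unnormalised Fourier coefficient of `f` at the character `ψ`. -/
noncomputable def charCoeff (f : G → ℂ) (ψ : AddChar G ℂ) : ℂ := ∑ g, f g * ψ (-g)

lemma sum_charCoeff_mul (f : G → ℂ) (h : G) :
    ∑ ψ, charCoeff f ψ * ψ h = Fintype.card G * f h := by
  classical
  calc ∑ ψ, charCoeff f ψ * ψ h = ∑ g, f g * ∑ ψ : AddChar G ℂ, ψ (h - g) := by
        simp_rw [charCoeff, sum_mul, mul_sum]
        rw [sum_comm]
        refine sum_congr rfl fun g _ => sum_congr rfl fun ψ _ => ?_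
        rw [mul_assoc, ← AddChar.map_add_eq_mul, neg_add_eq_sub]
    _ = Fintype.card G * f h := by
        simp [AddChar.sum_apply_eq_ite, sub_eq_zero, mul_comm]

lemma apply_eq_apply_of_charCoeff_eq_zero {f : G → ℂ}
    (hf : ∀ ψ : AddChar G ℂ, ψ ≠ 0 → charCoeff f ψ = 0) (g h : G) : f g = f h := by
  have card_mul (a : G) : Fintype.card G * f a = charCoeff f 0 := by
    rw [← sum_charCoeff_mul, Fintype.sum_eq_single 0 fun ψ hψ => by rw [hf ψ hψ, zero_mul]]
    simp
  exact mul_left_cancel₀ (Nat.cast_ne_zero.2 Fintype.card_ne_zero)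
    ((card_mul g).trans (card_mul h).symm)

/-- The energy `(x | w * x)` of `x` for the convolution kernel `w`. -/
def convEnergy (w x : G → ℝ) : ℝ := ∑ h, x h * ∑ g, w g * x (h - g)

lemma card_mul_convEnergy (w x : G → ℝ) :
    Fintype.card G * convEnergy w x =
      ∑ ψ : AddChar G ℂ, (∑ g, w g * (ψ g).re) * ‖charCoeff (fun g => (x g : ℂ)) ψ‖ ^ 2 := by
  set c : AddChar G ℂ → ℂ := charCoeff fun g => (x g : ℂ) with hc
  have conj_c (ψ : AddChar G ℂ) : conj (c ψ) = ∑ h, (x h : ℂ) * ψ h := by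
    simp [hc, charCoeff, AddChar.map_neg_eq_conj]
  have complex_form : ((Fintype.card G * convEnergy w x : ℝ) : ℂ) =
      ∑ ψ : AddChar G ℂ, (∑ g, (w g : ℂ) * ψ (-g)) * (c ψ * conj (c ψ)) :=
    calc ((Fintype.card G * convEnergy w x : ℝ) : ℂ)
        = ∑ h, ∑ g, (x h : ℂ) * w g * (Fintype.card G * x (h - g)) := by
          simp only [convEnergy, Complex.ofReal_sum, Complex.ofReal_mul]
          simp_rw [mul_sum]
          refine sum_congr rfl fun h _ => sum_congr rfl fun g _ => ?_
          rw [Complex.ofReal_natCast]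
          ring
      _ = ∑ h, ∑ g, ∑ ψ : AddChar G ℂ, (x h : ℂ) * w g * (c ψ * (ψ h * ψ (-g))) := by
          simp_rw [← sum_charCoeff_mul (fun g => (x g : ℂ)), mul_sum, sub_eq_add_neg,
            AddChar.map_add_eq_mul, hc]
      _ = ∑ ψ, ∑ h, ∑ g, (x h : ℂ) * w g * (c ψ * (ψ h * ψ (-g))) := by
          exact (sum_congr rfl fun h _ => sum_comm).trans sum_comm
      _ = ∑ ψ : AddChar G ℂ, (∑ g, (w g : ℂ) * ψ (-g)) * (c ψ * conj (c ψ)) := by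
          simp_rw [conj_c, mul_sum, sum_mul]
          exact sum_congr rfl fun ψ _ => sum_congr rfl fun h _ => sum_congr rfl fun g _ => by ring
  simpa [Complex.mul_conj', ← Complex.ofReal_pow, AddChar.map_neg_eq_conj]
    using congrArg Complex.re complex_form

lemma sum_sq_norm_charCoeff (x : G → ℝ) :
    ∑ ψ, ‖charCoeff (fun g => (x g : ℂ)) ψ‖ ^ 2 = Fintype.card G * ∑ g, x g ^ 2 := by
  classical
  simpa [convEnergy, Pi.single_apply, ← sq] using
    (card_mul_convEnergy (Pi.single 0 1) x).symm

lemma card_mul_convEnergy_sub (w x : G → ℝ) :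
    Fintype.card G * (convEnergy w x - (∑ g, w g) * ∑ g, x g ^ 2) =
      ∑ ψ : AddChar G ℂ, (∑ g, w g * (ψ g).re - ∑ g, w g) *
        ‖charCoeff (fun g => (x g : ℂ)) ψ‖ ^ 2 := by
  simp_rw [sub_mul, sum_sub_distrib, ← card_mul_convEnergy, ← mul_sum, sum_sq_norm_charCoeff]
  ring

section GroundState

variable {w : G → ℝ}

lemma sub_mul_sq_norm_charCoeff_nonneg
    (hw : ∀ ψ : AddChar G ℂ, ψ ≠ 0 → ∑ g, w g ≤ ∑ g, w g * (ψ g).re) (x : G → ℝ)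
    (ψ : AddChar G ℂ) :
    0 ≤ (∑ g, w g * (ψ g).re - ∑ g, w g) * ‖charCoeff (fun g => (x g : ℂ)) ψ‖ ^ 2 := by
  rcases eq_or_ne ψ 0 with rfl | hψ
  · simp
  · exact mul_nonneg (sub_nonneg.2 (hw ψ hψ)) (sq_nonneg _)

lemma sum_mul_sum_sq_le_convEnergy
    (hw : ∀ ψ : AddChar G ℂ, ψ ≠ 0 → ∑ g, w g ≤ ∑ g, w g * (ψ g).re) (x : G → ℝ) :
    (∑ g, w g) * ∑ g, x g ^ 2 ≤ convEnergy w x := by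
  have hcard : (0 : ℝ) < Fintype.card G := Nat.cast_pos.2 Fintype.card_pos
  rw [← sub_nonneg]
  refine nonneg_of_mul_nonneg_right ?_ hcard
  rw [card_mul_convEnergy_sub]
  exact sum_nonneg fun ψ _ => sub_mul_sq_norm_charCoeff_nonneg hw x ψ

lemma convEnergy_eq_sum_mul_sum_sq_iff
    (hw : ∀ ψ : AddChar G ℂ, ψ ≠ 0 → ∑ g, w g < ∑ g, w g * (ψ g).re) (x : G → ℝ) :
    convEnergy w x = (∑ g, w g) * ∑ g, x g ^ 2 ↔ ∀ g h, x g = x h := by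
  constructor
  · intro heq g h
    have hsum := card_mul_convEnergy_sub w x
    rw [heq, sub_self, mul_zero, eq_comm,
      sum_eq_zero_iff_of_nonneg fun ψ _ =>
        sub_mul_sq_norm_charCoeff_nonneg (fun ψ hψ => (hw ψ hψ).le) x ψ] at hsum
    have coeff_eq_zero (ψ : AddChar G ℂ) (hψ : ψ ≠ 0) : charCoeff (fun g => (x g : ℂ)) ψ = 0 := by
      simpa [(sub_pos.2 (hw ψ hψ)).ne'] using hsum ψ (mem_univ ψ)
    exact_mod_cast apply_eq_apply_of_charCoeff_eq_zero coeff_eq_zero g h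
  · intro hx
    obtain ⟨c, rfl⟩ : ∃ c, x = fun _ => c := ⟨x 0, funext fun g => hx g 0⟩
    simp only [convEnergy, ← sum_mul, sum_const, nsmul_eq_mul]
    ring

end GroundState

section Minimisers

variable {x : G → ℝ} {ε : AddChar G ℝ}

lemma isHalfDensity_signIndicator_addChar (hε : ε ≠ 0) : IsHalfDensity (signIndicator ε) :=
  isHalfDensity_signIndicator (real_addChar_sq_eq_one ε) (AddChar.sum_eq_zero_iff_ne_zero.2 hε)

lemma isHalfDensity_signIndicator_neg_addChar (hε : ε ≠ 0) :
    IsHalfDensity (signIndicator (-⇑ε)) :=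
  isHalfDensity_signIndicator (by simpa using real_addChar_sq_eq_one ε)
    (by simpa using AddChar.sum_eq_zero_iff_ne_zero.2 hε)

lemma IsHalfDensity.sum_twist_sq (hx : IsHalfDensity x) (ε : AddChar G ℝ) :
    ∑ g, (ε g * (x g - 1 / 2)) ^ 2 = (Fintype.card G : ℝ) / 4 := by
  have expand (g : G) : (ε g * (x g - 1 / 2)) ^ 2 = x g * x g - x g + 1 / 4 := by
    rw [mul_pow, real_addChar_sq_eq_one]
    ring
  simp_rw [expand, sum_add_distrib, sum_sub_distrib, hx.1, hx.2]
  simp [div_eq_mul_inv]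

lemma convEnergy_const_add (w : G → ℝ) (c : ℝ) {y : G → ℝ} (hy : ∑ g, y g = 0) :
    convEnergy w (fun g => c + y g) = Fintype.card G * c ^ 2 * ∑ g, w g + convEnergy w y := by
  have hshift : ∑ h, ∑ g, w g * y (h - g) = 0 := by
    rw [sum_comm]
    refine sum_eq_zero fun g _ => ?_
    have translate : ∑ h, y (h - g) = ∑ h, y h := (Equiv.subRight g).sum_comp y
    rw [← mul_sum, translate, hy, mul_zero]
  have expand (h : G) : (c + y h) * ∑ g, w g * (c + y (h - g)) =
      c ^ 2 * ∑ g, w g + (c * ∑ g, w g) * y h + c * ∑ g, w g * y (h - g) +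
        y h * ∑ g, w g * y (h - g) := by
    simp_rw [mul_add, sum_add_distrib, ← sum_mul]
    ring
  simp_rw [convEnergy, expand, sum_add_distrib, ← mul_sum, hy, hshift, sum_const, card_univ,
    nsmul_eq_mul]
  ring

lemma convEnergy_twist (w y : G → ℝ) (ε : AddChar G ℝ) :
    convEnergy w (fun g => ε g * y g) = convEnergy (fun g => w g * ε g) y := by
  have char_mul (h g : G) : ε h * ε (h - g) = ε g := by
    have hne : ε g ≠ 0 := fun h0 => by simpa [h0] using real_addChar_sq_eq_one ε g
    rw [AddChar.map_sub_eq_div]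
    field_simp
    rw [real_addChar_sq_eq_one, real_addChar_sq_eq_one]
  simp_rw [convEnergy, mul_sum]
  refine sum_congr rfl fun h _ => sum_congr rfl fun g _ => ?_
  rw [← char_mul h g]
  ring

lemma IsHalfDensity.convEnergy_eq (hx : IsHalfDensity x) (w : G → ℝ) (ε : AddChar G ℝ) :
    convEnergy w x = Fintype.card G / 4 * ∑ g, w g +
      convEnergy (fun g => w g * ε g) fun g => ε g * (x g - 1 / 2) := by
  have untwist (g : G) : ε g * (ε g * (x g - 1 / 2)) = x g - 1 / 2 := by
    linear_combination (x g - 1 / 2) * real_addChar_sq_eq_one ε g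
  rw [← convEnergy_twist]
  simp_rw [untwist]
  have split := convEnergy_const_add w (1 / 2) hx.sum_sub_half
  simp only [add_sub_cancel] at split
  rw [split]
  ring

lemma IsHalfDensity.twist_const_iff (hx : IsHalfDensity x) :
    (∀ g h, ε g * (x g - 1 / 2) = ε h * (x h - 1 / 2)) ↔
      x = signIndicator ε ∨ x = signIndicator (-⇑ε) := by
  constructor
  · intro hconst
    have affine (g : G) : x g = 1 / 2 + (x 0 - 1 / 2) * ε g := by
      have h0 : ε g * (x g - 1 / 2) = x 0 - 1 / 2 := by simpa using hconst g 0
      linear_combination ε g * h0 - (x g - 1 / 2) * real_addChar_sq_eq_one ε g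
    have hsq : (x 0 - 1 / 2) ^ 2 = (1 / 2) ^ 2 := by
      have hsum := hx.sum_twist_sq ε
      simp_rw [hconst _ 0, sum_const, card_univ, nsmul_eq_mul, AddChar.map_zero_eq_one] at hsum
      have hcard : (Fintype.card G : ℝ) ≠ 0 := Nat.cast_ne_zero.2 Fintype.card_ne_zero
      refine mul_left_cancel₀ hcard ?_
      linear_combination hsum
    refine (sq_eq_sq_iff_eq_or_eq_neg.1 hsq).imp (fun h => ?_) fun h => ?_ <;>
    · funext g
      rw [affine, h]
      simp only [signIndicator, Pi.neg_apply]
      ring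
  · rintro (rfl | rfl) g h <;> simp only [signIndicator, Pi.neg_apply]
    · linear_combination (real_addChar_sq_eq_one ε g - real_addChar_sq_eq_one ε h) / 2
    · linear_combination (real_addChar_sq_eq_one ε h - real_addChar_sq_eq_one ε g) / 2

theorem IsHalfDensity.signIndicator_minimises {w : G → ℝ} (hε : ε ≠ 0)
    (hw : ∀ ψ : AddChar G ℂ, ψ ≠ 0 → ∑ g, w g * ε g < ∑ g, w g * ε g * (ψ g).re)
    (hx : IsHalfDensity x) :
    convEnergy w (signIndicator ε) ≤ convEnergy w x ∧
      (convEnergy w x = convEnergy w (signIndicator ε) ↔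
        x = signIndicator ε ∨ x = signIndicator (-⇑ε)) := by
  have hmin := isHalfDensity_signIndicator_addChar hε
  have min_energy := (convEnergy_eq_sum_mul_sum_sq_iff hw _).2
    (hmin.twist_const_iff.2 (Or.inl rfl))
  rw [hmin.sum_twist_sq] at min_energy
  have lower_bound := sum_mul_sum_sq_le_convEnergy (fun ψ hψ => (hw ψ hψ).le)
    fun g => ε g * (x g - 1 / 2)
  have equality_iff := convEnergy_eq_sum_mul_sum_sq_iff hw fun g => ε g * (x g - 1 / 2)
  rw [hx.sum_twist_sq, ← min_energy] at lower_bound equality_iff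
  rw [hx.convEnergy_eq w ε, hmin.convEnergy_eq w ε, add_le_add_iff_left, add_right_inj,
    ← hx.twist_const_iff]
  exact ⟨lower_bound, equality_iff⟩

end Minimisers

section PairSum

variable [DecidableEq G] {w : G → ℝ}

lemma sum_mul_sum_erase_eq_convEnergy (hw : w 0 = 0) (x : G → ℝ) :
    ∑ h, x h * ∑ g ∈ univ.erase 0, w g * x (h - g) = convEnergy w x :=
  sum_congr rfl fun h _ => by rw [sum_erase _ (by rw [hw, zero_mul])]

lemma sum_sum_erase_eq_convEnergy_indicator (hw : w 0 = 0) (S : Finset G) :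
    ∑ h ∈ S, ∑ g ∈ S.erase h, w (h - g) = convEnergy w ((S : Set G).indicator 1) := by
  have inner (h : G) : ∑ g, w g * (S : Set G).indicator 1 (h - g) = ∑ g ∈ S.erase h, w (h - g) := by
    rw [← (Equiv.subLeft h).sum_comp, sum_erase S (by rw [sub_self, hw])]
    simp [Set.indicator_apply]
  simp_rw [convEnergy, inner]
  simp [Set.indicator_apply]

end PairSum

end FiniteAbelianGroup

section AlternatingCosineSum

open Real

/-- The `j`-th summand `(-1) ^ j * cos (j * θ) / j`; it is `0` for `j = 0` since `0⁻¹ = 0`. -/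
noncomputable def altCosTerm (j : ℕ) (θ : ℝ) : ℝ := (j : ℝ)⁻¹ * (-1) ^ j * cos (j * θ)

/-- The sum of `altCosTerm j θ` over the Lee distances `j` of the elements of a cycle of length
`2 * m`: every distance strictly between `0` and `m` occurs twice. -/
noncomputable def altCosSum (m : ℕ) (θ : ℝ) : ℝ :=
  ∑ j ∈ range m, (altCosTerm j θ + altCosTerm (j + 1) θ)

lemma hasDerivAt_altCosTerm (j : ℕ) (θ : ℝ) :
    HasDerivAt (altCosTerm j) (-(-1) ^ j * sin (j * θ)) θ := by
  have hderiv := (((hasDerivAt_id θ).const_mul (j : ℝ)).cos).const_mul ((j : ℝ)⁻¹ * (-1) ^ j)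
  refine hderiv.congr_deriv ?_
  rcases eq_or_ne j 0 with rfl | hj
  · simp
  · simp only [id]
    field_simp

lemma cos_half_mul_sum_alternating_sin (m : ℕ) (θ : ℝ) :
    cos (θ / 2) * ∑ j ∈ range m, (-(-1) ^ j * sin (j * θ) + -(-1) ^ (j + 1) * sin ((j + 1 : ℕ) * θ))
      = sin (θ / 2) * (1 - (-1) ^ m * cos (m * θ)) := by
  have telescope (j : ℕ) :
      cos (θ / 2) * (-(-1) ^ j * sin (j * θ) + -(-1) ^ (j + 1) * sin ((j + 1 : ℕ) * θ)) =
        sin (θ / 2) * ((-1) ^ j * cos (j * θ) - (-1) ^ (j + 1) * cos ((j + 1 : ℕ) * θ)) := by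
    have left : (j : ℝ) * θ = (j * θ + θ / 2) - θ / 2 := by ring
    have right : ((j + 1 : ℕ) : ℝ) * θ = (j * θ + θ / 2) + θ / 2 := by push_cast; ring
    rw [right]
    generalize (j : ℝ) * θ + θ / 2 = midpoint at left
    rw [left, sin_add, sin_sub, cos_add, cos_sub]
    ring
  rw [mul_sum, sum_congr rfl fun j _ => telescope j, ← mul_sum,
    sum_range_sub' fun j : ℕ => (-1 : ℝ) ^ j * cos (j * θ)]
  simp

lemma hasDerivAt_altCosSum (m : ℕ) {θ : ℝ} (hθ : cos (θ / 2) ≠ 0) :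
    HasDerivAt (altCosSum m) (tan (θ / 2) * (1 - (-1) ^ m * cos (m * θ))) θ := by
  have hderiv : HasDerivAt (altCosSum m) _ θ := HasDerivAt.fun_sum fun j _ =>
    (hasDerivAt_altCosTerm j θ).add (hasDerivAt_altCosTerm (j + 1) θ)
  refine hderiv.congr_deriv (mul_left_cancel₀ hθ ?_)
  rw [cos_half_mul_sum_alternating_sin, ← mul_assoc, mul_comm (cos _), tan_mul_cos hθ]

lemma continuous_altCosSum (m : ℕ) : Continuous (altCosSum m) := by
  unfold altCosSum altCosTerm
  fun_prop

lemma cos_half_pos {θ : ℝ} (hθ : θ ∈ Set.Ioo 0 π) : 0 < cos (θ / 2) :=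
  cos_pos_of_mem_Ioo ⟨by linarith [hθ.1, pi_pos], by linarith [hθ.2]⟩

lemma tan_half_pos {θ : ℝ} (hθ : θ ∈ Set.Ioo 0 π) : 0 < tan (θ / 2) :=
  tan_pos_of_pos_of_lt_pi_div_two (by linarith [hθ.1]) (by linarith [hθ.2])

lemma neg_one_pow_mul_le_abs (m : ℕ) (a : ℝ) : (-1) ^ m * a ≤ |a| :=
  (le_abs_self _).trans_eq (by simp [abs_mul])

lemma monotoneOn_altCosSum (m : ℕ) : MonotoneOn (altCosSum m) (Set.Icc 0 π) := by
  refine monotoneOn_of_hasDerivWithinAt_nonneg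
    (f' := fun θ => tan (θ / 2) * (1 - (-1) ^ m * cos (m * θ)))
    (convex_Icc _ _) (continuous_altCosSum m).continuousOn ?_ ?_ <;>
    rw [interior_Icc] <;> intro θ hθ
  · exact (hasDerivAt_altCosSum m (cos_half_pos hθ).ne').hasDerivWithinAt
  · exact mul_nonneg (tan_half_pos hθ).le
      (sub_nonneg.2 ((neg_one_pow_mul_le_abs m _).trans (abs_cos_le_one _)))

lemma strictMonoOn_altCosSum {m : ℕ} (hm : m ≠ 0) :
    StrictMonoOn (altCosSum m) (Set.Icc 0 (π / m)) := by
  have hm1 : (1 : ℝ) ≤ m := Nat.one_le_cast.2 (Nat.one_le_iff_ne_zero.2 hm)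
  have hm0 : (0 : ℝ) < m := one_pos.trans_le hm1
  have mem_Ioo {θ : ℝ} (hθ : θ ∈ Set.Ioo 0 (π / m)) : θ ∈ Set.Ioo 0 π :=
    ⟨hθ.1, hθ.2.trans_le (div_le_self pi_pos.le hm1)⟩
  refine strictMonoOn_of_hasDerivWithinAt_pos
    (f' := fun θ => tan (θ / 2) * (1 - (-1) ^ m * cos (m * θ)))
    (convex_Icc _ _) (continuous_altCosSum m).continuousOn ?_ ?_ <;>
    rw [interior_Icc] <;> intro θ hθ
  · exact (hasDerivAt_altCosSum m (cos_half_pos (mem_Ioo hθ)).ne').hasDerivWithinAt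
  · have sin_pos : 0 < sin (m * θ) :=
      sin_pos_of_pos_of_lt_pi (mul_pos hm0 hθ.1) ((lt_div_iff₀' hm0).1 hθ.2)
    have abs_cos_lt_one : |cos (m * θ)| < 1 := by
      rw [← sq_lt_one_iff_abs_lt_one]
      linarith [sin_sq_add_cos_sq (m * θ), pow_pos sin_pos 2]
    exact mul_pos (tan_half_pos (mem_Ioo hθ))
      (sub_pos.2 ((neg_one_pow_mul_le_abs m _).trans_lt abs_cos_lt_one))

lemma altCosSum_zero_lt {m : ℕ} (hm : m ≠ 0) {θ : ℝ} (hθ : 0 < θ) (hθπ : θ ≤ π) :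
    altCosSum m 0 < altCosSum m θ := by
  have hδ : 0 < min θ (π / m) := by positivity
  calc altCosSum m 0 < altCosSum m (min θ (π / m)) :=
        strictMonoOn_altCosSum hm ⟨le_rfl, by positivity⟩ ⟨hδ.le, min_le_right _ _⟩ hδ
    _ ≤ altCosSum m θ :=
        monotoneOn_altCosSum m ⟨hδ.le, (min_le_left _ _).trans hθπ⟩ ⟨hθ.le, hθπ⟩ (min_le_left _ _)

end AlternatingCosineSum

section Cycle

variable {n : ℕ}

/-- The Lee distance of `g` from `0`, i.e. the distance in the cycle of length `n`, for
`n ≠ 0`. -/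
def leeDist (g : ZMod n) : ℕ := min g.val (n - g.val)

lemma inv_leeDist_zero : (leeDist (0 : ZMod n) : ℝ)⁻¹ = 0 := by simp [leeDist]

variable [NeZero n]

lemma eq_leeDist_or_eq_neg_leeDist (g : ZMod n) :
    g = (leeDist g : ZMod n) ∨ g = -(leeDist g : ZMod n) := by
  rcases min_choice g.val (n - g.val) with h | h
  · exact Or.inl (by rw [leeDist, h, ZMod.natCast_zmod_val])
  · exact Or.inr (by rw [leeDist, h, Nat.cast_sub (ZMod.val_lt g).le]; simp)

lemma apply_eq_apply_leeDist {α : Type*} (f : ZMod n → α) (hf : ∀ g, f (-g) = f g) (g : ZMod n) :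
    f g = f (leeDist g : ZMod n) := by
  rcases eq_leeDist_or_eq_neg_leeDist g with h | h
  · exact congrArg f h
  · exact (congrArg f h).trans (hf _)

lemma sum_leeDist {M : Type*} [AddCommMonoid M] {m : ℕ} (hn : n = m + m) (φ : ℕ → M) :
    ∑ g : ZMod n, φ (leeDist g) = ∑ j ∈ range m, (φ j + φ (j + 1)) := by
  have sum_val : ∑ g : ZMod n, φ (leeDist g) = ∑ j ∈ range n, φ (min j (n - j)) :=
    sum_nbij' ZMod.val (fun j => (j : ZMod n)) (fun g _ => mem_range.2 (ZMod.val_lt g))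
      (fun _ _ => mem_univ _) (fun g _ => ZMod.natCast_zmod_val g)
      (fun j hj => ZMod.val_natCast_of_lt (mem_range.1 hj)) fun _ _ => rfl
  have lower_half : ∀ j ∈ range m, φ (min j (n - j)) = φ j := fun j hj => by
    rw [min_eq_left (by have := mem_range.1 hj; omega)]
  have upper_half : ∀ j ∈ range m, φ (min (m + (m - 1 - j)) (n - (m + (m - 1 - j)))) = φ (j + 1) :=
    fun j hj => by
      have := mem_range.1 hj
      congr 1
      omega
  rw [sum_val, hn, sum_range_add, sum_add_distrib, ← hn, sum_congr rfl lower_half,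
    ← sum_range_reflect fun j => φ (min (m + j) (n - (m + j))), sum_congr rfl upper_half]

lemma re_char_eq_cos (ψ : AddChar (ZMod n) ℂ) (g : ZMod n) :
    (ψ g).re = Real.cos (leeDist g * |(ψ 1).arg|) := by
  have even (g : ZMod n) : (ψ (-g)).re = (ψ g).re := by
    rw [AddChar.map_neg_eq_conj, Complex.conj_re]
  have polar : ψ 1 = Complex.exp ((ψ 1).arg * Complex.I) := by
    simpa [AddChar.norm_apply] using (Complex.norm_mul_exp_arg_mul_I (ψ 1)).symm
  rw [apply_eq_apply_leeDist (fun g => (ψ g).re) even g, ← nsmul_one, AddChar.map_nsmul_eq_pow,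
    polar, ← Complex.exp_nat_mul, ← mul_assoc, ← Complex.ofReal_natCast, ← Complex.ofReal_mul,
    Complex.exp_ofReal_mul_I_re, ← polar, ← Real.cos_abs, abs_mul, Nat.abs_cast]

lemma abs_arg_char_one_pos {ψ : AddChar (ZMod n) ℂ} (hψ : ψ ≠ 0) : 0 < |(ψ 1).arg| := by
  refine abs_pos.2 fun harg => (AddChar.zmod_char_ne_one_iff n ψ).1 hψ ?_
  simpa [harg, AddChar.norm_apply] using (Complex.norm_mul_exp_arg_mul_I (ψ 1)).symm

/-- The character `g ↦ (-1) ^ g` of a cycle of even length. -/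
noncomputable def signChar (hn : Even n) : AddChar (ZMod n) ℝ := AddChar.zmodChar n hn.neg_one_pow

variable (hn : Even n)

lemma signChar_apply (g : ZMod n) : signChar hn g = (-1) ^ g.val := AddChar.zmodChar_apply _ g

lemma signChar_eq_neg_one_pow_leeDist (g : ZMod n) : signChar hn g = (-1) ^ leeDist g := by
  have even (g : ZMod n) : signChar hn (-g) = signChar hn g := by
    rw [AddChar.map_neg_eq_conj, conj_trivial]
  rw [apply_eq_apply_leeDist _ even, signChar, AddChar.zmodChar_apply']

lemma signChar_ne_zero : signChar hn ≠ 0 := by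
  refine AddChar.ne_zero_iff.2 ⟨1, ?_⟩
  rw [← Nat.cast_one, signChar, AddChar.zmodChar_apply']
  norm_num

lemma signIndicator_signChar :
    signIndicator (signChar hn) = fun g => if g.val % 2 = 0 then 1 else 0 := by
  funext g
  rw [signIndicator, signChar_apply]
  rcases Nat.even_or_odd g.val with h | h
  · simp [h.neg_one_pow, Nat.even_iff.1 h]
  · simp [h.neg_one_pow, Nat.odd_iff.1 h]

lemma signIndicator_neg_signChar :
    signIndicator (-⇑(signChar hn)) = fun g => if g.val % 2 = 1 then 1 else 0 := by
  funext g
  rw [signIndicator, Pi.neg_apply, signChar_apply]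
  rcases Nat.even_or_odd g.val with h | h
  · simp [h.neg_one_pow, Nat.even_iff.1 h]
  · simp [h.neg_one_pow, Nat.odd_iff.1 h]

lemma sum_inv_leeDist_mul_signChar_lt {ψ : AddChar (ZMod n) ℂ} (hψ : ψ ≠ 0) :
    ∑ g, (leeDist g : ℝ)⁻¹ * signChar hn g <
      ∑ g, (leeDist g : ℝ)⁻¹ * signChar hn g * (ψ g).re := by
  obtain ⟨m, hm⟩ := id hn
  have hm0 : m ≠ 0 := by
    rintro rfl
    exact NeZero.ne n hm
  have coeff (θ : ℝ) : ∑ g : ZMod n, (leeDist g : ℝ)⁻¹ * signChar hn g * Real.cos (leeDist g * θ) =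
      altCosSum m θ := by
    simp_rw [signChar_eq_neg_one_pow_leeDist]
    exact sum_leeDist hm fun j => altCosTerm j θ
  calc ∑ g, (leeDist g : ℝ)⁻¹ * signChar hn g = altCosSum m 0 := by simp [← coeff]
    _ < altCosSum m |(ψ 1).arg| :=
        altCosSum_zero_lt hm0 (abs_arg_char_one_pos hψ) (Complex.abs_arg_le_pi _)
    _ = ∑ g, (leeDist g : ℝ)⁻¹ * signChar hn g * (ψ g).re := by simp_rw [← coeff, re_char_eq_cos]

end Cycle

theorem cycle_checkerboard_minimises (n : ℕ) [NeZero n] (heven : Even n) :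
    let lee : ZMod n → ℕ := fun g => min g.val (n - g.val)
    let A : (ZMod n → ℝ) → (ZMod n → ℝ) := fun x h =>
      ∑ g ∈ Finset.univ.erase (0 : ZMod n), ((lee g : ℝ))⁻¹ * x (h - g)
    let E : (ZMod n → ℝ) → ℝ := fun x => ∑ h : ZMod n, x h * A x h
    let xe : ZMod n → ℝ := fun g => if g.val % 2 = 0 then 1 else 0
    let xo : ZMod n → ℝ := fun g => if g.val % 2 = 1 then 1 else 0
    let constr : (ZMod n → ℝ) → Prop := fun x =>
      (∑ g : ZMod n, x g * x g) = (n : ℝ) / 2 ∧ (∑ g : ZMod n, x g) = (n : ℝ) / 2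
    let Se : Finset (ZMod n) := Finset.univ.filter (fun g => g.val % 2 = 0)
    let So : Finset (ZMod n) := Finset.univ.filter (fun g => g.val % 2 = 1)
    let Etot : Finset (ZMod n) → ℝ := fun S => ∑ h ∈ S, ∑ g ∈ S.erase h, ((lee (h - g) : ℝ))⁻¹
    (constr xe ∧ constr xo ∧
      (∀ x : ZMod n → ℝ, constr x → E xe ≤ E x) ∧
      (∀ x : ZMod n → ℝ, constr x → (E x = E xe ↔ x = xe ∨ x = xo))) ∧
    (∀ S : Finset (ZMod n), S.card = n / 2 →
      Etot Se ≤ Etot S ∧ (Etot S = Etot Se ↔ S = Se ∨ S = So)) := by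
  intro lee A E xe xo constr Se So Etot
  have hconstr (x : ZMod n → ℝ) : IsHalfDensity x ↔ constr x := by
    simp only [IsHalfDensity, ZMod.card, constr]
  have hE (x : ZMod n → ℝ) : E x = convEnergy (fun g => (leeDist g : ℝ)⁻¹) x :=
    sum_mul_sum_erase_eq_convEnergy inv_leeDist_zero x
  have hEtot (S : Finset (ZMod n)) : Etot S = E ((S : Set (ZMod n)).indicator 1) :=
    (sum_sum_erase_eq_convEnergy_indicator inv_leeDist_zero S).trans (hE _).symm
  have hxe : signIndicator (signChar heven) = xe := signIndicator_signChar heven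
  have hxo : signIndicator (-⇑(signChar heven)) = xo := signIndicator_neg_signChar heven
  have hSe : (Se : Set (ZMod n)).indicator 1 = xe := by ext g; simp [Se, xe, Set.indicator_apply]
  have hSo : (So : Set (ZMod n)).indicator 1 = xo := by ext g; simp [So, xo, Set.indicator_apply]
  have hε := signChar_ne_zero heven
  have hmin (x : ZMod n → ℝ) (hx : constr x) : E xe ≤ E x ∧ (E x = E xe ↔ x = xe ∨ x = xo) := by
    rw [hE, hE, ← hxe, ← hxo]
    exact ((hconstr x).2 hx).signIndicator_minimises hε
      fun ψ => sum_inv_leeDist_mul_signChar_lt heven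
  refine ⟨⟨(hconstr xe).1 (hxe ▸ isHalfDensity_signIndicator_addChar hε),
    (hconstr xo).1 (hxo ▸ isHalfDensity_signIndicator_neg_addChar hε),
    fun x hx => (hmin x hx).1, fun x hx => (hmin x hx).2⟩, fun S hS => ?_⟩
  have hhalf : (#S : ℝ) = Fintype.card (ZMod n) / 2 := by
    rw [hS, ZMod.card, Nat.cast_div heven.two_dvd two_ne_zero, Nat.cast_ofNat]
  simpa only [hEtot, ← hSe, ← hSo, indicator_one_coe_inj] using
    hmin _ ((hconstr _).1 (isHalfDensity_indicator hhalf))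
end

section
/- Let each n_i (i = 1,…,d) be either 2 or a multiple of 4, G = ∏_i ℤ/n_i with Lee distance δ, and f : ℝ₊ → ℝ₊ completely monotonic. Then the function on characters χ of G given by λ(χ) = ∑_{g ∈ G, g≠0} f(δ(g,0)) χ(g) has a unique minimum at the character χ = (−1,…,−1) (i.e., χ(g) = (−1)^{g₁+…+g_d}). -/
/-- `f` is completely monotonic on `ℝ₊`: it is `C^∞` on `(0, ∞)` and its `k`-th
derivative has sign `(−1)^k` there. -/
def CompletelyMonotonic (f : ℝ → ℝ) : Prop :=
  ContDiffOn ℝ (⊤ : ℕ∞) f (Set.Ioi 0) ∧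
    ∀ k : ℕ, ∀ x : ℝ, 0 < x → 0 < (-1 : ℝ) ^ k * iteratedDerivWithin k f (Set.Ioi 0) x

/-!
The forward differences of `a m = f (m + 1)` alternate in sign, which says that the linear
functional `X ^ m ↦ a m` is positive on every `X ^ i * (1 - X) ^ j`. A polynomial positive on
`[0, 1]` has positive Bernstein coefficients in large degree, and zeros at `0` and `1` can be
divided out, so the functional is positive on every polynomial that is positive on `(0, 1)`. This
replaces Bernstein's integral representation of `f`: a strict inequality that is linear in the
values of `f` at positive integers needs to be checked only for the powers `f m = x ^ m`,
`0 < x < 1`.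

For a power the sum over the torus factors over the coordinates. Two geometric sums evaluate the
factor of `ℤ/2N` at a character with `ψ 1 = w` as
`(1 - w ^ N x ^ N) (1 - x ^ 2) / ‖1 - w x‖ ^ 2`, where `w ^ N = ±1`. At `w = -1` the denominator is
largest and, for even `N`, the numerator is smallest.
-/

open Finset Polynomial Set Filter Topology fwdDiff

lemma sum_choose_mul_bernsteinPolynomial (R : Type*) [CommRing R] (N m : ℕ) :
    ∑ i ∈ range (N + 1), (i.choose m : R[X]) * bernsteinPolynomial R N i =
      (N.choose m : R[X]) * X ^ m := by
  rcases lt_or_ge N m with hNm | hmN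
  · rw [Nat.choose_eq_zero_of_lt hNm, Nat.cast_zero, zero_mul]
    refine sum_eq_zero fun i hi => ?_
    rw [Nat.choose_eq_zero_of_lt (by grind), Nat.cast_zero, zero_mul]
  obtain ⟨M, rfl⟩ := Nat.exists_eq_add_of_le hmN
  have below : ∑ i ∈ range m, (i.choose m : R[X]) * bernsteinPolynomial R (m + M) i = 0 :=
    sum_eq_zero fun i hi => by
      rw [Nat.choose_eq_zero_of_lt (Finset.mem_range.1 hi), Nat.cast_zero, zero_mul]
  rw [add_assoc, sum_range_add, below, zero_add, ← mul_one (_ * X ^ m),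
    ← bernsteinPolynomial.sum R M, mul_sum]
  refine sum_congr rfl fun k _ => ?_
  have hchoose : (m + M).choose (m + k) * (m + k).choose m = (m + M).choose m * M.choose k := by
    rw [Nat.choose_mul (Nat.le_add_right m k), Nat.add_sub_cancel_left, Nat.add_sub_cancel_left]
  simp only [bernsteinPolynomial, Nat.add_sub_add_left]
  have hcast := congrArg (Nat.cast (R := R[X])) hchoose
  push_cast at hcast
  linear_combination X ^ (m + k) * (1 - X) ^ (M - k) * hcast

/-- Evaluation of `p` at `t` with each power `t ^ m` replaced by the normalized falling factorial
`∏ l < m, (t - l h) / (1 - l h)` of step `h`. At `h = 1 / N` and `t = i / N` this is the `i`-th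
coefficient of `p` in the Bernstein basis of degree `N`; at `h = 0` it is `p.eval t`. -/
noncomputable def fallingEval {K : Type*} [Field K] (p : K[X]) (h t : K) : K :=
  p.sum fun m a => a * ∏ l ∈ range m, (t - l * h) / (1 - l * h)

lemma prod_range_div_eq_choose_div_choose {K : Type*} [Field K] [CharZero K] {N m : ℕ}
    (hm : m ≤ N) (i : ℕ) :
    ∏ l ∈ range m, ((i / N : K) - l * (1 / N)) / (1 - l * (1 / N)) =
      (i.choose m : K) / N.choose m := by
  have hfactor : ∀ l ∈ range m,
      ((i / N : K) - l * (1 / N)) / (1 - l * (1 / N)) = (i - l) / (N - l) := fun l hl => by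
    have hN : (N : K) ≠ 0 := Nat.cast_ne_zero.2 (by grind)
    rw [← mul_div_mul_left _ _ hN]
    congr 1 <;> field_simp
  rw [prod_congr rfl hfactor, prod_div_distrib, ← descPochhammer_eval_eq_prod_range,
    ← descPochhammer_eval_eq_prod_range, descPochhammer_eval_eq_descFactorial,
    descPochhammer_eval_eq_descFactorial, Nat.descFactorial_eq_factorial_mul_choose,
    Nat.descFactorial_eq_factorial_mul_choose, Nat.cast_mul, Nat.cast_mul,
    mul_div_mul_left _ _ (Nat.cast_ne_zero.2 m.factorial_ne_zero)]

lemma eq_sum_fallingEval_mul_bernsteinPolynomial {K : Type*} [Field K] [CharZero K] {p : K[X]}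
    {N : ℕ} (hp : p.natDegree ≤ N) :
    p = ∑ i ∈ range (N + 1), C (fallingEval p (1 / N) (i / N)) * bernsteinPolynomial K N i := by
  have hmonomial : ∀ m ≤ N, (X : K[X]) ^ m =
      ∑ i ∈ range (N + 1), C ((i.choose m : K) / N.choose m) * bernsteinPolynomial K N i := by
    intro m hm
    have hNm : (N.choose m : K) ≠ 0 := Nat.cast_ne_zero.2 (Nat.choose_pos hm).ne'
    have hexpand := sum_choose_mul_bernsteinPolynomial K N m
    simp only [← C_eq_natCast] at hexpand
    calc (X : K[X]) ^ m = C (N.choose m : K)⁻¹ * (C (N.choose m : K) * X ^ m) := by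
          rw [← mul_assoc, ← C_mul, inv_mul_cancel₀ hNm, C_1, one_mul]
      _ = _ := by
          rw [← hexpand, mul_sum]
          refine sum_congr rfl fun i _ => ?_
          rw [← mul_assoc, ← C_mul, div_eq_inv_mul]
  have hcoeff : ∀ m ∈ p.support, C (p.coeff m) * X ^ m = ∑ i ∈ range (N + 1),
      C (p.coeff m * ∏ l ∈ range m, ((i / N : K) - l * (1 / N)) / (1 - l * (1 / N))) *
        bernsteinPolynomial K N i := fun m hm => by
    have hmN : m ≤ N := (le_natDegree_of_mem_supp m hm).trans hp
    simp only [prod_range_div_eq_choose_div_choose hmN, C_mul, mul_assoc, ← mul_sum,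
      ← hmonomial m hmN]
  conv_lhs => rw [← p.sum_C_mul_X_pow_eq, sum_def, sum_congr rfl hcoeff, sum_comm]
  simp only [fallingEval, sum_def, map_sum, sum_mul]

lemma fallingEval_zero {K : Type*} [Field K] (p : K[X]) (t : K) :
    fallingEval p 0 t = p.eval t := by
  simp [fallingEval, eval_eq_sum]

lemma continuousAt_fallingEval (p : ℝ[X]) (t : ℝ) :
    ContinuousAt (fun z : ℝ × ℝ => fallingEval p z.1 z.2) (0, t) := by
  simp only [fallingEval, sum_def]
  fun_prop (disch := simp)

/-- Bernstein's theorem on positive polynomials: the coefficients `fallingEval p (1 / N) (i / N)`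
approach the values `p.eval (i / N)` uniformly in `i`. -/
theorem exists_bernsteinPolynomial_coeff_pos {p : ℝ[X]} (hp : ∀ t ∈ Icc (0 : ℝ) 1, 0 < p.eval t) :
    ∃ (N : ℕ) (c : ℕ → ℝ), (∀ i ≤ N, 0 < c i) ∧
      p = ∑ i ∈ range (N + 1), C (c i) * bernsteinPolynomial ℝ N i := by
  have hpos : ∀ᶠ h in 𝓝 (0 : ℝ), ∀ t ∈ Icc (0 : ℝ) 1, 0 < fallingEval p h t :=
    isCompact_Icc.eventually_forall_of_forall_eventually fun t ht =>
      (continuousAt_fallingEval p t).eventually_const_lt (by simpa [fallingEval_zero] using hp t ht)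
  obtain ⟨N, hN, hdeg⟩ :=
    ((tendsto_one_div_atTop_nhds_zero_nat.eventually hpos).and
      (eventually_ge_atTop p.natDegree)).exists
  refine ⟨N, fun i => fallingEval p (1 / N) (i / N), fun i hi => hN _ ⟨by positivity, ?_⟩,
    eq_sum_fallingEval_mul_bernsteinPolynomial hdeg⟩
  exact div_le_one_of_le₀ (by exact_mod_cast hi) (Nat.cast_nonneg N)

lemma exists_eq_X_pow_mul_one_sub_X_pow_mul {R : Type*} [CommRing R] [IsDomain R] {p : R[X]}
    (hp : p ≠ 0) :
    ∃ (a b : ℕ) (q : R[X]), p = X ^ a * (1 - X) ^ b * q ∧ q.eval 0 ≠ 0 ∧ q.eval 1 ≠ 0 := by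
  obtain ⟨r, hpr, hr0⟩ := exists_eq_pow_rootMultiplicity_mul_and_not_dvd p hp 0
  have hr : r ≠ 0 := by rintro rfl; simp at hr0
  obtain ⟨q, hrq, hq1⟩ := exists_eq_pow_rootMultiplicity_mul_and_not_dvd r hr 1
  rw [dvd_iff_isRoot, IsRoot] at hr0 hq1
  refine ⟨p.rootMultiplicity 0, r.rootMultiplicity 1, (-1) ^ r.rootMultiplicity 1 * q, ?_, ?_, ?_⟩
  · conv_lhs => rw [hpr, hrq, C_0, sub_zero, C_1, ← neg_sub, neg_pow]
    ring
  · rw [hrq] at hr0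
    contrapose! hr0
    have : q.eval 0 = 0 := by simpa using hr0
    rw [eval_mul, this, mul_zero]
  · simpa using hq1

section PositiveFunctional

variable {L : ℝ[X] →ₗ[ℝ] ℝ}

lemma map_pos_of_eval_pos_on_Icc (hL : ∀ i j : ℕ, 0 < L (X ^ i * (1 - X) ^ j)) {p : ℝ[X]}
    (hp : ∀ t ∈ Icc (0 : ℝ) 1, 0 < p.eval t) : 0 < L p := by
  obtain ⟨N, c, hc, rfl⟩ := exists_bernsteinPolynomial_coeff_pos hp
  rw [map_sum]
  refine sum_pos (fun i hi => ?_) nonempty_range_add_one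
  have hiN : i ≤ N := Nat.lt_succ_iff.1 (Finset.mem_range.1 hi)
  have hterm : C (c i) * bernsteinPolynomial ℝ N i =
      (c i * N.choose i) • (X ^ i * (1 - X) ^ (N - i)) := by
    rw [bernsteinPolynomial, smul_eq_C_mul, C_mul, C_eq_natCast]
    ring
  rw [hterm, map_smul, smul_eq_mul]
  have := Nat.choose_pos hiN
  have := hc i hiN
  have := hL i (N - i)
  positivity

theorem map_pos_of_eval_pos_on_Ioo (hL : ∀ i j : ℕ, 0 < L (X ^ i * (1 - X) ^ j)) {p : ℝ[X]}
    (hp : ∀ t ∈ Ioo (0 : ℝ) 1, 0 < p.eval t) : 0 < L p := by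
  have hp0 : p ≠ 0 := by
    rintro rfl
    simpa using hp (1 / 2) (by norm_num)
  obtain ⟨a, b, q, rfl, hq0, hq1⟩ := exists_eq_X_pow_mul_one_sub_X_pow_mul hp0
  have hq_Ioo : ∀ t ∈ Ioo (0 : ℝ) 1, 0 < q.eval t := by
    intro t ht
    have hfactor : 0 < t ^ a * (1 - t) ^ b := mul_pos (pow_pos ht.1 a) (pow_pos (sub_pos.2 ht.2) b)
    have hpt := hp t ht
    simp only [eval_mul, eval_pow, eval_X, eval_sub, eval_one] at hpt
    exact pos_of_mul_pos_right hpt hfactor.le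
  have hq_nonneg : Icc (0 : ℝ) 1 ⊆ {t | 0 ≤ q.eval t} := by
    rw [← closure_Ioo zero_ne_one]
    exact closure_minimal (fun t ht => (hq_Ioo t ht).le) (isClosed_le continuous_const q.continuous)
  have hq_Icc : ∀ t ∈ Icc (0 : ℝ) 1, 0 < q.eval t := by
    intro t ht
    refine (hq_nonneg ht).lt_of_ne' ?_
    rcases eq_endpoints_or_mem_Ioo_of_mem_Icc ht with rfl | rfl | ht'
    exacts [hq0, hq1, (hq_Ioo t ht').ne']
  refine map_pos_of_eval_pos_on_Icc (L := L ∘ₗ LinearMap.mulLeft ℝ (X ^ a * (1 - X) ^ b))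
    (fun i j => ?_) hq_Icc
  have hmul : (X ^ a * (1 - X) ^ b * (X ^ i * (1 - X) ^ j) : ℝ[X]) =
      X ^ (a + i) * (1 - X) ^ (b + j) := by ring
  simpa only [LinearMap.comp_apply, LinearMap.mulLeft_apply, hmul] using hL (a + i) (b + j)

end PositiveFunctional

/-- The moment functional of the sequence `a`: the linear functional `X ^ m ↦ a m`. -/
noncomputable def momentFunctional (a : ℕ → ℝ) : ℝ[X] →ₗ[ℝ] ℝ :=
  (basisMonomials ℝ).constr ℝ a

lemma momentFunctional_X_pow (a : ℕ → ℝ) (m : ℕ) : momentFunctional a (X ^ m) = a m := by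
  rw [momentFunctional, X_pow_eq_monomial, ← congrFun (coe_basisMonomials ℝ) m,
    Module.Basis.constr_basis]

lemma momentFunctional_X_pow_mul_one_sub_X_pow (a : ℕ → ℝ) (i j : ℕ) :
    momentFunctional a (X ^ i * (1 - X) ^ j) = (-1) ^ j * Δ_[1] ^[j] a i := by
  induction j generalizing i with
  | zero => simp [momentFunctional_X_pow]
  | succ j ih =>
    have hsplit : (X ^ i * (1 - X) ^ (j + 1) : ℝ[X]) =
        X ^ i * (1 - X) ^ j - X ^ (i + 1) * (1 - X) ^ j := by ring
    rw [hsplit, map_sub, ih, ih, Function.iterate_succ_apply', fwdDiff]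
    ring

/-- Complete monotonicity of a sequence, in the strict form: its `k`-th forward differences have
sign `(-1) ^ k`. -/
def CompletelyMonotoneSeq (a : ℕ → ℝ) : Prop :=
  ∀ k m : ℕ, 0 < (-1 : ℝ) ^ k * Δ_[1] ^[k] a m

theorem CompletelyMonotoneSeq.sum_mul_pos {a : ℕ → ℝ} (ha : CompletelyMonotoneSeq a) {ι : Type*}
    {s : Finset ι} {c : ι → ℝ} {e : ι → ℕ}
    (hc : ∀ x ∈ Ioo (0 : ℝ) 1, 0 < ∑ i ∈ s, c i * x ^ e i) : 0 < ∑ i ∈ s, c i * a (e i) := by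
  have hL : ∀ i j : ℕ, 0 < momentFunctional a (X ^ i * (1 - X) ^ j) := fun i j => by
    rw [momentFunctional_X_pow_mul_one_sub_X_pow]
    exact ha j i
  have hpos := map_pos_of_eval_pos_on_Ioo hL (p := ∑ i ∈ s, c i • X ^ e i) fun x hx => by
    simpa [eval_finsetSum] using hc x hx
  simpa only [map_sum, map_smul, momentFunctional_X_pow, smul_eq_mul] using hpos

namespace CompletelyMonotonic

variable {f : ℝ → ℝ}

lemma strictAntiOn (hf : CompletelyMonotonic f) (k : ℕ) :
    StrictAntiOn (fun x => (-1 : ℝ) ^ k * iteratedDerivWithin k f (Ioi 0) x) (Ioi 0) := by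
  have hdiff : DifferentiableOn ℝ (iteratedDerivWithin k f (Ioi 0)) (Ioi 0) :=
    hf.1.differentiableOn_iteratedDerivWithin (by exact_mod_cast WithTop.coe_lt_top k)
      (uniqueDiffOn_Ioi 0)
  refine strictAntiOn_of_deriv_neg (convex_Ioi 0) (hdiff.continuousOn.const_mul _) fun x hx => ?_
  rw [interior_Ioi] at hx
  have hpos := hf.2 (k + 1) x hx
  rw [iteratedDerivWithin_succ, derivWithin_of_isOpen isOpen_Ioi hx, pow_succ] at hpos
  rw [deriv_const_mul _ (hdiff.differentiableAt (Ioi_mem_nhds hx))]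
  linarith

lemma sub_comp_add_const (hf : CompletelyMonotonic f) {h : ℝ} (hh : 0 < h) :
    CompletelyMonotonic fun x => f x - f (x + h) := by
  have hmaps : MapsTo (· + h) (Ioi 0) (Ioi (0 : ℝ)) := fun x hx => add_pos hx hh
  have hshift : ContDiffOn ℝ (⊤ : ℕ∞) (fun x => f (x + h)) (Ioi 0) :=
    hf.1.comp (contDiff_id.add contDiff_const).contDiffOn hmaps
  refine ⟨hf.1.sub hshift, fun k x (hx : x ∈ Set.Ioi 0) => ?_⟩
  have hxh : x + h ∈ Ioi (0 : ℝ) := hmaps hx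
  have hderiv : iteratedDerivWithin k (fun x => f x - f (x + h)) (Ioi 0) x =
      iteratedDerivWithin k f (Ioi 0) x - iteratedDerivWithin k f (Ioi 0) (x + h) := by
    have hk : ((k : ℕ∞) : WithTop ℕ∞) ≤ ((⊤ : ℕ∞) : WithTop ℕ∞) := by exact_mod_cast le_top
    rw [← Pi.sub_def f, iteratedDerivWithin_sub hx (uniqueDiffOn_Ioi 0) ((hf.1 x hx).of_le hk)
        ((hshift x hx).of_le hk),
      iteratedDerivWithin_of_isOpen isOpen_Ioi (f := fun x => f (x + h)) hx,
      iteratedDeriv_comp_add_const, iteratedDerivWithin_of_isOpen isOpen_Ioi hxh]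
  rw [hderiv, mul_sub, sub_pos]
  exact hf.strictAntiOn k hx hxh (lt_add_of_pos_right x hh)

theorem completelyMonotoneSeq (hf : CompletelyMonotonic f) {x h : ℝ} (hx : 0 < x) (hh : 0 < h) :
    CompletelyMonotoneSeq fun m => f (x + m * h) := by
  rw [CompletelyMonotoneSeq]
  intro k
  induction k generalizing f with
  | zero => exact fun m => by simpa using hf.2 0 (x + m * h) (by positivity)
  | succ k ih =>
    intro m
    have hneg : Δ_[1] (fun m : ℕ => f (x + m * h)) =
        (-1 : ℝ) • fun m : ℕ => f (x + m * h) - f (x + m * h + h) := by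
      ext m
      have : x + (m + 1) * h = x + m * h + h := by ring
      simp [fwdDiff, this]
    rw [Function.iterate_succ_apply, hneg, fwdDiff_iter_const_smul, Pi.smul_apply, smul_eq_mul,
      ← mul_assoc, ← pow_succ, pow_succ, pow_succ, mul_assoc (_ ^ k), neg_one_mul, neg_neg, mul_one]
    exact ih (hf.sub_comp_add_const hh) m

end CompletelyMonotonic

lemma sum_range_pow_min_mul_pow {K : Type*} [Field K] {N : ℕ} {w : K} (hw : w ^ (2 * N) = 1)
    (hw0 : w ≠ 0) (x : K) :
    (∑ j ∈ range (2 * N), x ^ min j (2 * N - j) * w ^ j) * ((1 - w * x) * (1 - w⁻¹ * x)) =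
      (1 - w ^ N * x ^ N) * (1 - x ^ 2) := by
  have hinv : ∀ i j : ℕ, i + j = 2 * N → w ^ i = w⁻¹ ^ j := fun i j hij => by
    rw [inv_pow]
    exact eq_inv_of_mul_eq_one_left (by rw [← pow_add, hij, hw])
  have hlow : ∑ j ∈ range N, x ^ min j (2 * N - j) * w ^ j = ∑ j ∈ range N, (w * x) ^ j :=
    sum_congr rfl fun j hj => by
      rw [min_eq_left (by grind), mul_pow, mul_comm]
  have hhigh : ∑ j ∈ range N, x ^ min (N + j) (2 * N - (N + j)) * w ^ (N + j) =
      w⁻¹ * x * ∑ j ∈ range N, (w⁻¹ * x) ^ j := by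
    rw [← sum_range_reflect, mul_sum]
    refine sum_congr rfl fun j hj => ?_
    have hjN : j < N := Finset.mem_range.1 hj
    rw [hinv (N + (N - 1 - j)) (j + 1) (by omega),
      show min (N + (N - 1 - j)) (2 * N - (N + (N - 1 - j))) = j + 1 by omega, ← mul_pow,
      mul_comm x, pow_succ']
  rw [two_mul N, sum_range_add, ← two_mul, hlow, hhigh]
  have hgeom := mul_neg_geom_sum (w * x) N
  have hgeom_inv := mul_neg_geom_sum (w⁻¹ * x) N
  rw [mul_pow] at hgeom hgeom_inv
  rw [← hinv N N (two_mul N).symm] at hgeom_inv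
  linear_combination (1 - w⁻¹ * x) * hgeom + w⁻¹ * x * (1 - w * x) * hgeom_inv
    - (1 - w ^ N * x ^ N) * x ^ 2 * mul_inv_cancel₀ hw0

lemma one_sub_mul_ne_zero {w : ℂ} (hw : ‖w‖ = 1) {x : ℝ} (hx : |x| < 1) : 1 - w * x ≠ 0 :=
  fun h => hx.ne <| by simpa [hw] using congrArg norm (sub_eq_zero.1 h).symm

lemma norm_one_sub_mul_lt {w : ℂ} (hw : ‖w‖ = 1) (hne : w ≠ -1) {x : ℝ} (hx : 0 < x) :
    ‖1 - w * x‖ < 1 + x := by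
  have hnorm : ‖-(w * x)‖ = x := by
    rw [norm_neg, norm_mul, hw, one_mul, Complex.norm_of_nonneg hx.le]
  have hray : ¬SameRay ℝ 1 (-(w * x)) := by
    rw [sameRay_iff_norm_smul_eq, hnorm, norm_one, one_smul, Complex.real_smul, mul_one,
      ← neg_mul, mul_eq_right₀ (Complex.ofReal_ne_zero.2 hx.ne'), neg_eq_iff_eq_neg]
    exact hne
  simpa only [← sub_eq_add_neg, norm_one, hnorm] using norm_add_lt_of_not_sameRay hray

section LeeWeight

variable {n : ℕ}

/-- The Lee weight of a residue class `a` modulo `n`, i.e. its circular distance to `0`. For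
`n ≠ 0`, `a.val` is the representative of `a` in `[0, n)`. -/
def leeWeight (a : ZMod n) : ℕ :=
  min a.val (n - a.val)

lemma leeWeight_zero : leeWeight (0 : ZMod n) = 0 := by
  simp [leeWeight]

lemma addChar_zmod_one_pow {M : Type*} [Monoid M] (ψ : AddChar (ZMod n) M) : ψ 1 ^ n = 1 := by
  rw [← AddChar.map_nsmul_eq_pow, nsmul_one, ZMod.natCast_self, AddChar.map_zero_eq_one]

variable [NeZero n]

lemma leeWeight_pos {a : ZMod n} (ha : a ≠ 0) : 0 < leeWeight a :=
  lt_min (ZMod.val_pos.2 ha) (Nat.sub_pos_of_lt a.val_lt)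

lemma addChar_zmod_eq_pow {M : Type*} [Monoid M] (ψ : AddChar (ZMod n) M) (a : ZMod n) :
    ψ a = ψ 1 ^ a.val := by
  rw [← AddChar.map_nsmul_eq_pow, nsmul_one, ZMod.natCast_zmod_val]

lemma addChar_zmod_ext {M : Type*} [Monoid M] {ψ φ : AddChar (ZMod n) M} (h : ψ 1 = φ 1) :
    ψ = φ := by
  ext a
  rw [addChar_zmod_eq_pow ψ, addChar_zmod_eq_pow φ, h]

lemma norm_addChar_zmod_one (ψ : AddChar (ZMod n) ℂ) : ‖ψ 1‖ = 1 :=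
  Complex.norm_eq_one_of_pow_eq_one (addChar_zmod_one_pow ψ) (NeZero.ne n)

/-- The Lee weight enumerator of `ℤ/n` twisted by the character `ψ`. -/
noncomputable def leeEnumerator (ψ : AddChar (ZMod n) ℂ) (x : ℝ) : ℂ :=
  ∑ a, (x : ℂ) ^ leeWeight a * ψ a

lemma leeEnumerator_eq_sum_range (ψ : AddChar (ZMod n) ℂ) (x : ℝ) :
    leeEnumerator ψ x = ∑ j ∈ range n, (x : ℂ) ^ min j (n - j) * ψ 1 ^ j :=
  sum_nbij ZMod.val (fun a _ => Finset.mem_range.2 a.val_lt) (ZMod.val_injective n).injOn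
    (fun j hj => ⟨j, mem_coe.2 (Finset.mem_univ _), ZMod.val_cast_of_lt (Finset.mem_range.1 hj)⟩)
    fun a _ => by rw [leeWeight, addChar_zmod_eq_pow ψ a]

lemma leeEnumerator_two (ψ : AddChar (ZMod 2) ℂ) (x : ℝ) : leeEnumerator ψ x = 1 + x * ψ 1 := by
  simp [leeEnumerator_eq_sum_range, sum_range_succ]

lemma leeEnumerator_eq_div {N : ℕ} (hN : n = 2 * N) (ψ : AddChar (ZMod n) ℂ) {x : ℝ}
    (hx : |x| < 1) :
    leeEnumerator ψ x = (1 - ψ 1 ^ N * x ^ N) * (1 - x ^ 2) / ‖1 - ψ 1 * x‖ ^ 2 := by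
  subst hN
  have hψ : ‖ψ 1‖ = 1 := norm_addChar_zmod_one ψ
  have hnorm : (‖1 - ψ 1 * x‖ : ℂ) ^ 2 = (1 - ψ 1 * x) * (1 - (ψ 1)⁻¹ * x) := by
    rw [Complex.inv_eq_conj hψ, ← Complex.mul_conj']
    simp
  rw [eq_div_iff (by simpa using one_sub_mul_ne_zero hψ hx), hnorm, leeEnumerator_eq_sum_range]
  exact sum_range_pow_min_mul_pow (addChar_zmod_one_pow ψ) (norm_ne_zero_iff.1 (by simp [hψ])) _

variable {ψ₀ ψ : AddChar (ZMod n) ℂ} {x : ℝ}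

lemma leeEnumerator_of_apply_one_eq_neg_one {N : ℕ} (hN : n = 2 * N) (hN_even : Even N)
    (hx0 : 0 < x) (hx1 : x < 1) (hψ₀ : ψ₀ 1 = -1) :
    leeEnumerator ψ₀ x = ((1 - x ^ N) * (1 - x ^ 2) / (1 + x) ^ 2 : ℝ) := by
  rw [leeEnumerator_eq_div hN ψ₀ (abs_lt.2 ⟨by linarith, hx1⟩), hψ₀, hN_even.neg_one_pow, one_mul,
    neg_one_mul, sub_neg_eq_add]
  norm_cast
  rw [Real.norm_of_nonneg (by positivity)]

open scoped ComplexOrder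

lemma leeEnumerator_pos (hn : n = 2 ∨ 4 ∣ n) (hx0 : 0 < x) (hx1 : x < 1) (hψ₀ : ψ₀ 1 = -1) :
    0 < leeEnumerator ψ₀ x := by
  rcases hn with rfl | ⟨M, hM⟩
  · rw [leeEnumerator_two, hψ₀, mul_neg_one, ← sub_eq_add_neg, sub_pos]
    exact_mod_cast hx1
  · have hN : n = 2 * (2 * M) := by omega
    have hN0 : 2 * M ≠ 0 := by have := NeZero.ne n; omega
    rw [leeEnumerator_of_apply_one_eq_neg_one hN (even_two_mul M) hx0 hx1 hψ₀,
      Complex.zero_lt_real]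
    have := sub_pos.2 (pow_lt_one₀ hx0.le hx1 hN0)
    have := sub_pos.2 (pow_lt_one₀ hx0.le hx1 two_ne_zero)
    positivity

lemma leeEnumerator_lt (hn : n = 2 ∨ 4 ∣ n) (hx0 : 0 < x) (hx1 : x < 1) (hψ₀ : ψ₀ 1 = -1)
    (hne : ψ ≠ ψ₀) : leeEnumerator ψ₀ x < leeEnumerator ψ x := by
  have hψ : ψ 1 ≠ -1 := fun h => hne (addChar_zmod_ext (h.trans hψ₀.symm))
  rcases hn with rfl | ⟨M, hM⟩
  · have hψ_one : ψ 1 = 1 := (sq_eq_one_iff.1 (addChar_zmod_one_pow ψ)).resolve_right hψ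
    rw [leeEnumerator_two, leeEnumerator_two, hψ₀, hψ_one, add_lt_add_iff_left]
    have hx : (0 : ℂ) < x := Complex.zero_lt_real.2 hx0
    exact mul_lt_mul_of_pos_left (neg_lt_self one_pos) hx
  · have hN : n = 2 * (2 * M) := by omega
    have hN0 : 2 * M ≠ 0 := by have := NeZero.ne n; omega
    have hxN : x ^ (2 * M) < 1 := pow_lt_one₀ hx0.le hx1 hN0
    have hx_sq : x ^ 2 < 1 := pow_lt_one₀ hx0.le hx1 two_ne_zero
    have hx_abs : |x| < 1 := abs_lt.2 ⟨by linarith, hx1⟩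
    have hnorm : ‖ψ 1‖ = 1 := norm_addChar_zmod_one ψ
    obtain ⟨s, hs, hs1⟩ : ∃ s : ℝ, ψ 1 ^ (2 * M) = s ∧ s ≤ 1 := by
      have hsq : (ψ 1 ^ (2 * M)) ^ 2 = 1 := by
        rw [← pow_mul, mul_comm, ← hN, addChar_zmod_one_pow]
      rcases sq_eq_one_iff.1 hsq with h | h
      exacts [⟨1, by simpa using h, le_rfl⟩, ⟨-1, by simpa using h, by norm_num⟩]
    have hden : ‖1 - ψ 1 * x‖ < 1 + x := norm_one_sub_mul_lt hnorm hψ hx0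
    have hden_pos : 0 < ‖1 - ψ 1 * x‖ :=
      norm_pos_iff.2 (one_sub_mul_ne_zero hnorm hx_abs)
    rw [leeEnumerator_of_apply_one_eq_neg_one hN (even_two_mul M) hx0 hx1 hψ₀,
      leeEnumerator_eq_div hN ψ hx_abs, hs]
    norm_cast
    have hnum : s * x ^ (2 * M) ≤ x ^ (2 * M) := mul_le_of_le_one_left (by positivity) hs1
    have hx_sq_pos : 0 < 1 - x ^ 2 := sub_pos.2 hx_sq
    exact div_lt_div₀' (by gcongr) (by gcongr)
      (mul_pos (sub_pos.2 (hnum.trans_lt hxN)) hx_sq_pos) (by positivity)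

end LeeWeight

section FactorChar

variable {ι : Type*} [DecidableEq ι] {A : ι → Type*} {M : Type*}

/-- The restriction of a character of `∏ i, A i` to the `i`-th factor. -/
def factorChar [∀ i, AddMonoid (A i)] [Monoid M] (χ : AddChar (∀ i, A i) M) (i : ι) :
    AddChar (A i) M :=
  χ.compAddMonoidHom (AddMonoidHom.single A i)

lemma factorChar_apply [∀ i, AddMonoid (A i)] [Monoid M] (χ : AddChar (∀ i, A i) M) (i : ι)
    (a : A i) : factorChar χ i a = χ (Pi.single i a) :=
  rfl

lemma eq_prod_factorChar [Fintype ι] [∀ i, AddCommMonoid (A i)] [CommMonoid M]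
    (χ : AddChar (∀ i, A i) M) (g : ∀ i, A i) : χ g = ∏ i, factorChar χ i (g i) := by
  conv_lhs => rw [← univ_sum_single g]
  exact map_prod χ.toMonoidHom (fun i => Multiplicative.ofAdd (Pi.single i (g i))) univ

lemma exists_factorChar_ne [Finite ι] [∀ i, AddCommMonoid (A i)] [CommMonoid M]
    {χ χ' : AddChar (∀ i, A i) M} (h : χ ≠ χ') : ∃ i, factorChar χ i ≠ factorChar χ' i := by
  have := Fintype.ofFinite ι
  contrapose! h
  ext g
  simp only [eq_prod_factorChar _ g, h]

end FactorChar

section Torus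

variable {ι : Type*} [Fintype ι] {n : ι → ℕ}

/-- The Lee weight of a point of the toric grid `∏ i, ℤ/n i`, i.e. its `ℓ¹`-circular distance to
`0`. -/
def leeNorm (g : ∀ i, ZMod (n i)) : ℕ :=
  ∑ i, leeWeight (g i)

lemma leeNorm_zero : leeNorm (0 : ∀ i, ZMod (n i)) = 0 :=
  sum_eq_zero fun _ _ => leeWeight_zero

lemma leeNorm_pos [∀ i, NeZero (n i)] {g : ∀ i, ZMod (n i)} (hg : g ≠ 0) : 0 < leeNorm g := by
  obtain ⟨i, hi⟩ := Function.ne_iff.1 hg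
  exact sum_pos' (fun _ _ => Nat.zero_le _) ⟨i, Finset.mem_univ i, leeWeight_pos hi⟩

variable [DecidableEq ι] {χ₀ χ : AddChar (∀ i, ZMod (n i)) ℂ}

lemma factorChar_one_eq_neg_one (hχ₀ : ∀ g, χ₀ g = (-1 : ℂ) ^ ∑ i, (g i).val) {i : ι}
    (hi : n i ≠ 1) : factorChar χ₀ i 1 = -1 := by
  rw [factorChar_apply, hχ₀, Finset.sum_eq_single_of_mem i (Finset.mem_univ i), Pi.single_eq_same,
    ZMod.val_one'' hi, pow_one]
  intro j _ hj
  rw [Pi.single_eq_of_ne hj, ZMod.val_zero]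

variable [∀ i, NeZero (n i)]

lemma sum_pow_leeNorm_mul (χ : AddChar (∀ i, ZMod (n i)) ℂ) (x : ℝ) :
    ∑ g, (x : ℂ) ^ leeNorm g * χ g = ∏ i, leeEnumerator (factorChar χ i) x := by
  simp only [leeEnumerator, Finset.prod_univ_sum, Fintype.piFinset_univ, eq_prod_factorChar χ,
    prod_mul_distrib, prod_pow_eq_pow_sum, leeNorm]

/-- The eigenvalue at the character `χ` of the operator on functions on the toric grid whose kernel
is `f` of the Lee distance off the diagonal and `0` on it. The sum is real, since
`leeNorm (-g) = leeNorm g`; `re` only changes its type. -/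
noncomputable def leeEigenvalue (f : ℕ → ℝ) (χ : AddChar (∀ i, ZMod (n i)) ℂ) : ℝ :=
  (∑ g ∈ univ.erase 0, (f (leeNorm g) : ℂ) * χ g).re

lemma leeEigenvalue_sub_leeEigenvalue (f : ℕ → ℝ) :
    leeEigenvalue f χ - leeEigenvalue f χ₀ =
      ∑ g ∈ univ.erase 0, ((χ g).re - (χ₀ g).re) * f (leeNorm g) := by
  simp only [leeEigenvalue, Complex.re_sum, Complex.re_ofReal_mul, ← sum_sub_distrib, sub_mul,
    mul_comm (f _)]

lemma leeEigenvalue_pow (χ : AddChar (∀ i, ZMod (n i)) ℂ) (x : ℝ) :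
    leeEigenvalue (x ^ ·) χ = (∏ i, leeEnumerator (factorChar χ i) x).re - 1 := by
  rw [← sum_pow_leeNorm_mul, ← add_sum_erase _ _ (Finset.mem_univ 0)]
  simp [leeEigenvalue, leeNorm_zero]

open scoped ComplexOrder in
lemma leeEigenvalue_pow_lt (hn : ∀ i, n i = 2 ∨ 4 ∣ n i)
    (hχ₀ : ∀ g, χ₀ g = (-1 : ℂ) ^ ∑ i, (g i).val) (hne : χ ≠ χ₀) {x : ℝ} (hx0 : 0 < x)
    (hx1 : x < 1) : leeEigenvalue (x ^ ·) χ₀ < leeEigenvalue (x ^ ·) χ := by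
  have hχ₀_one : ∀ i, factorChar χ₀ i 1 = -1 := fun i =>
    factorChar_one_eq_neg_one hχ₀ (by have := hn i; omega)
  have hlt : ∀ i, factorChar χ i ≠ factorChar χ₀ i →
      leeEnumerator (factorChar χ₀ i) x < leeEnumerator (factorChar χ i) x := fun i =>
    leeEnumerator_lt (hn i) hx0 hx1 (hχ₀_one i)
  have hle : ∀ i, leeEnumerator (factorChar χ₀ i) x ≤ leeEnumerator (factorChar χ i) x := by
    intro i
    rcases eq_or_ne (factorChar χ i) (factorChar χ₀ i) with hi | hi
    exacts [hi ▸ le_rfl, (hlt i hi).le]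
  have hprod : ∏ i, leeEnumerator (factorChar χ₀ i) x < ∏ i, leeEnumerator (factorChar χ i) x := by
    obtain ⟨i, hi⟩ := exists_factorChar_ne hne
    exact prod_lt_prod (fun j _ => leeEnumerator_pos (hn j) hx0 hx1 (hχ₀_one j))
      (fun j _ => hle j) ⟨i, Finset.mem_univ i, hlt i hi⟩
  rw [leeEigenvalue_pow, leeEigenvalue_pow, sub_lt_sub_iff_right]
  exact (Complex.lt_def.1 hprod).1

theorem toric_eigenvalue_unique_min_general (hn : ∀ i, n i = 2 ∨ 4 ∣ n i) {f : ℕ → ℝ}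
    (hf : CompletelyMonotoneSeq fun m => f (m + 1))
    (hχ₀ : ∀ g, χ₀ g = (-1 : ℂ) ^ ∑ i, (g i).val) (hne : χ ≠ χ₀) :
    leeEigenvalue f χ₀ < leeEigenvalue f χ := by
  have hshift : ∀ a : ℕ → ℝ, leeEigenvalue a χ - leeEigenvalue a χ₀ =
      ∑ g ∈ univ.erase 0, ((χ g).re - (χ₀ g).re) * a (leeNorm g - 1 + 1) := fun a => by
    rw [leeEigenvalue_sub_leeEigenvalue]
    refine sum_congr rfl fun g hg => ?_
    rw [Nat.sub_add_cancel (leeNorm_pos (ne_of_mem_erase hg))]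
  rw [← sub_pos, hshift]
  refine hf.sum_mul_pos fun x hx => ?_
  have hpow := sub_pos.2 (leeEigenvalue_pow_lt hn hχ₀ hne hx.1 hx.2)
  simp only [hshift, pow_succ, ← mul_assoc, ← sum_mul] at hpow
  exact pos_of_mul_pos_left hpow hx.1.le

end Torus

theorem toric_eigenvalue_unique_min (d : ℕ) (hd : 0 < d) (n : Fin d → ℕ) [∀ i, NeZero (n i)]
    (hn : ∀ i, n i = 2 ∨ 4 ∣ n i)
    (f : ℝ → ℝ) (hf : CompletelyMonotonic f) :
    let δ : (∀ i, ZMod (n i)) → ℕ := fun g => ∑ i, min ((g i).val) (n i - (g i).val)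
    let lam : AddChar (∀ i, ZMod (n i)) ℂ → ℝ := fun χ =>
      (∑ g ∈ Finset.univ.erase (0 : ∀ i, ZMod (n i)), (f (δ g) : ℂ) * χ g).re
    ∀ χ₀ χ : AddChar (∀ i, ZMod (n i)) ℂ,
      (∀ g : ∀ i, ZMod (n i), χ₀ g = (-1 : ℂ) ^ (∑ i, (g i).val)) →
      χ ≠ χ₀ → lam χ₀ < lam χ := by
  intro _ _ χ₀ χ hχ₀ hne
  have hseq : CompletelyMonotoneSeq fun m => f ((m + 1 : ℕ) : ℝ) := by
    simpa [add_comm] using hf.completelyMonotoneSeq one_pos one_pos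
  exact toric_eigenvalue_unique_min_general (f := fun m => f m) hn hseq hχ₀ hne
end

section
/- Let each n_i be either 2 or a multiple of 4, G = ∏_i ℤ/n_i with Lee distance δ, f : ℝ₊ → ℝ₊ completely monotonic, and u(g,h) = f(δ(g,h)). Then among all subsets S ⊆ G of cardinality |G|/2, both the total energy E_tot(S) and the maximal energy E_max(S) are minimised exactly by the two checkerboard configurations S_even = {g : ∑_i g_i even} and S_odd = {g : ∑_i g_i odd}. -/
/-!
Encode a half-size subset `S` of the torus by its `±1`-valued indicator `s`, which has sum zero. Up
to constants the total energy of `S` is the quadratic form of a convolution kernel at `s`, hence a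
nonnegative combination of the Fourier eigenvalues of the kernel with weights `|ŝ(ψ)|²` of fixed
total mass. It is therefore minimal, uniquely up to sign, when `s` is the character `ψ` of least
eigenvalue. The level sets of a real character see the same energy at each of their points, so they
minimise the maximal energy as well.

The parity character `x ↦ (-1) ^ ∑ i, x i` does have the strictly least eigenvalue. For the kernel
`r ^ ‖x‖` with `0 < r < 1` and `‖x‖` the Lee norm, the Fourier transform is a product over the
coordinates of one-dimensional transforms, which are explicit and smallest at `-1`. A completely
monotonic potential, on positive integers, is a mixture of the functions `k ↦ r ^ k`. In place of
the mixing measure we use the moment functional on polynomials: it is positive on Bernstein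
polynomials, and a polynomial positive on `(0, 1)` is, up to its zeros at `0` and `1`, a positive
combination of them.
-/

namespace Checkerboard

open Filter Polynomial Set Topology

/-- A strictly completely monotone sequence: by Hausdorff's theorem, the moment sequence of a
measure on `[0, 1]` not supported on `{0, 1}`. The values of a completely monotonic function at the
positive integers form such a sequence, indexed from `0`. -/
def CompletelyMonotoneSeq (a : ℕ → ℝ) : Prop :=
  ∀ m k : ℕ, 0 < (-1) ^ m * (fwdDiff 1)^[m] a k

section ForwardDifferences

lemma hasDerivAt_fwdDiff_iter {E : Type*} [NormedAddCommGroup E] [NormedSpace ℝ E]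
    {f f' : ℝ → E} {c h : ℝ} (hh : 0 ≤ h) (hf : ∀ x, c < x → HasDerivAt f (f' x) x) (m : ℕ) :
    ∀ x, c < x → HasDerivAt ((fwdDiff h)^[m] f) ((fwdDiff h)^[m] f' x) x := by
  induction m with
  | zero => exact hf
  | succ m ih =>
    intro x hx
    simp only [Function.iterate_succ_apply']
    exact ((ih (x + h) (by linarith)).comp_add_const x h).sub (ih x hx)

lemma neg_one_pow_mul_fwdDiff_iter_pos {F : ℕ → ℝ → ℝ} {c h : ℝ} (hh : 0 < h)
    (hderiv : ∀ k x, c < x → HasDerivAt (F k) (F (k + 1) x) x)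
    (hsign : ∀ k x, c < x → 0 < (-1) ^ k * F k x) (m : ℕ) :
    ∀ k x, c < x → 0 < (-1) ^ (m + k) * (fwdDiff h)^[m] (F k) x := by
  induction m with
  | zero => simpa using hsign
  | succ m ih =>
    intro k x hx
    have hderiv' (y : ℝ) (hy : c < y) := (hasDerivAt_fwdDiff_iter hh.le (hderiv k) m y hy).const_mul
      ((-1 : ℝ) ^ (m + k))
    have hanti : StrictAntiOn (fun y ↦ (-1) ^ (m + k) * (fwdDiff h)^[m] (F k) y) (Ioi c) := by
      refine strictAntiOn_of_deriv_neg (convex_Ioi c)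
        (fun y hy ↦ (hderiv' y hy).continuousAt.continuousWithinAt) fun y hy ↦ ?_
      rw [interior_Ioi] at hy
      rw [(hderiv' y hy).deriv]
      have := ih (k + 1) y hy
      rw [← add_assoc, pow_succ] at this
      linarith
    have hlt := hanti hx (show x + h ∈ Ioi c from hx.trans (by linarith)) (by linarith)
    rw [Function.iterate_succ_apply', fwdDiff, add_right_comm, pow_succ]
    linarith

lemma completelyMonotoneSeq_of_completelyMonotonic {f : ℝ → ℝ} (hf : CompletelyMonotonic f) :
    CompletelyMonotoneSeq fun k ↦ f (k + 1 : ℕ) := by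
  have hderiv (k : ℕ) (x : ℝ) (hx : 0 < x) : HasDerivAt (iteratedDerivWithin k f (Ioi 0))
      (iteratedDerivWithin (k + 1) f (Ioi 0) x) x := by
    have hdiff := hf.1.differentiableOn_iteratedDerivWithin (m := k)
      (mod_cast ENat.natCast_lt_top k) (uniqueDiffOn_Ioi 0)
    simpa only [iteratedDerivWithin_succ] using
      (hdiff x hx).hasDerivWithinAt.hasDerivAt (Ioi_mem_nhds hx)
  intro m k
  have hpos := neg_one_pow_mul_fwdDiff_iter_pos one_pos hderiv hf.2 m 0 (k + 1) (by positivity)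
  have hrestrict : (fwdDiff 1)^[m] (fun k : ℕ ↦ f (k + 1 : ℕ)) k = (fwdDiff 1)^[m] f (k + 1) := by
    simp [fwdDiff_iter_eq_sum_shift, add_right_comm]
  simpa only [hrestrict, iteratedDerivWithin_zero, add_zero] using hpos

end ForwardDifferences

section MomentFunctional

variable {R : Type*} [CommRing R] (a : ℕ → R)

/-- The linear functional on polynomials sending `X ^ k` to `a k`; for a moment sequence `a` it is
integration against the representing measure. -/
noncomputable def momentFunctional : R[X] →ₗ[R] R :=
  Polynomial.lsum fun i ↦ a i • LinearMap.id

lemma momentFunctional_monomial (i : ℕ) (c : R) :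
    momentFunctional a (monomial i c) = c * a i := by
  simp [momentFunctional, sum_monomial_index, mul_comm]

lemma momentFunctional_one_sub_X_mul (p : R[X]) :
    momentFunctional a ((1 - X) * p) = -momentFunctional (fwdDiff 1 a) p := by
  induction p using Polynomial.induction_on' with
  | add p q hp hq => rw [mul_add, map_add, map_add, hp, hq, neg_add]
  | monomial n c =>
    rw [sub_mul, one_mul, X_mul_monomial, map_sub]
    simp only [momentFunctional_monomial, fwdDiff]
    ring

lemma momentFunctional_X_pow_mul_one_sub_X_pow (k m : ℕ) :
    momentFunctional a (X ^ k * (1 - X) ^ m) = (-1) ^ m * (fwdDiff 1)^[m] a k := by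
  induction m generalizing a with
  | zero => simp [← monomial_one_right_eq_X_pow, momentFunctional_monomial]
  | succ m ih =>
    rw [pow_succ', mul_left_comm, momentFunctional_one_sub_X_mul, ih, Function.iterate_succ_apply]
    ring

end MomentFunctional

section BernsteinCoefficients

lemma X_pow_eq_sum_bernsteinPolynomial (K : Type*) [Field K] [CharZero K] {n j : ℕ} (hj : j ≤ n) :
    (X ^ j : K[X]) = ∑ k ∈ Finset.range (n + 1),
      C ((k.choose j : K) / n.choose j) * bernsteinPolynomial K n k := by
  obtain ⟨l, rfl⟩ := Nat.exists_eq_add_of_le hj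
  have hlow : ∑ k ∈ Finset.range j,
      C ((k.choose j : K) / (j + l).choose j) * bernsteinPolynomial K (j + l) k = 0 :=
    Finset.sum_eq_zero fun k hk ↦ by simp [Nat.choose_eq_zero_of_lt (Finset.mem_range.mp hk)]
  have hne : ((j + l).choose j : K) ≠ 0 := mod_cast (Nat.choose_pos hj).ne'
  have hbinomial : (X ^ j : K[X]) = X ^ j * (X + (1 - X)) ^ l := by simp
  rw [add_assoc, Finset.sum_range_add, hlow, zero_add, hbinomial, add_pow, Finset.mul_sum]
  refine Finset.sum_congr rfl fun i _ ↦ ?_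
  have hchoose : ((j + l).choose (j + i) : K) * (j + i).choose j =
      (j + l).choose j * l.choose i := by
    have := Nat.choose_mul (n := j + l) (k := j + i) (s := j) (by omega)
    simp only [add_tsub_cancel_left] at this
    exact_mod_cast this
  have hcoeff : (l.choose i : K) =
      (j + i).choose j / (j + l).choose j * (j + l).choose (j + i) := by
    rw [div_mul_eq_mul_div, eq_div_iff hne, mul_comm, ← hchoose, mul_comm]
  rw [bernsteinPolynomial, ← C_eq_natCast, ← C_eq_natCast, hcoeff, C_mul, Nat.add_sub_add_left,
    pow_add]
  ring

lemma choose_succ_div_choose_succ (n j k : ℕ) :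
    (k.choose (j + 1) : ℝ) / n.choose (j + 1) =
      k.choose j / n.choose j * ((k - j) / (n - j)) := by
  have hsucc (m : ℕ) : (m.choose (j + 1) : ℝ) * (j + 1) = m.choose j * (m - j) := by
    rcases le_or_gt j m with hm | hm
    · rw [← Nat.cast_sub hm]
      exact_mod_cast Nat.choose_succ_right_eq m j
    · simp [Nat.choose_eq_zero_of_lt hm, Nat.choose_eq_zero_of_lt (hm.trans j.lt_succ_self)]
  rw [div_mul_div_comm, ← hsucc, ← hsucc, mul_div_mul_right _ _ (by positivity)]

lemma abs_choose_div_choose_sub_pow_le {n j k : ℕ} (hj : j ≤ n) (hk : k ≤ n) :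
    |(k.choose j : ℝ) / n.choose j - (k / n : ℝ) ^ j| ≤
      ∑ i ∈ Finset.range j, (i : ℝ) / (n - i) := by
  induction j with
  | zero => simp
  | succ j ih =>
    have hkn : (k : ℝ) ≤ n := mod_cast hk
    have hjn : (j : ℝ) + 1 ≤ n := mod_cast hj
    have hn : (0 : ℝ) < n := by linarith [j.cast_nonneg (α := ℝ)]
    have hnj : (0 : ℝ) < n - j := by linarith
    rw [Finset.sum_range_succ, choose_succ_div_choose_succ, pow_succ]
    set c : ℝ := k.choose j / n.choose j
    set q : ℝ := (k - j) / (n - j)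
    set t : ℝ := k / n
    have ht₀ : 0 ≤ t := by positivity
    have ht₁ : t ≤ 1 := div_le_one_of_le₀ hkn hn.le
    have hc₀ : 0 ≤ c := by positivity
    have hc₁ : c ≤ 1 :=
      div_le_one_of_le₀ (mod_cast Nat.choose_le_choose j hk) (Nat.cast_nonneg _)
    have hqt : |q - t| ≤ j / (n - j) := by
      have heq : q - t = -(j * (1 - t) / (n - j)) := by
        simp only [q, t]
        field_simp
        ring
      rw [heq, abs_neg, abs_of_nonneg (div_nonneg (mul_nonneg j.cast_nonneg (by linarith)) hnj.le)]
      gcongr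
      exact mul_le_of_le_one_right j.cast_nonneg (by linarith)
    calc |c * q - t ^ j * t| = |(c - t ^ j) * t + c * (q - t)| := by ring_nf
      _ ≤ |c - t ^ j| * t + c * |q - t| := by
        simpa only [abs_mul, abs_of_nonneg ht₀, abs_of_nonneg hc₀] using
          abs_add_le ((c - t ^ j) * t) (c * (q - t))
      _ ≤ |c - t ^ j| + |q - t| :=
        add_le_add (mul_le_of_le_one_right (abs_nonneg _) ht₁)
          (mul_le_of_le_one_left (abs_nonneg _) hc₁)
      _ ≤ _ := add_le_add (ih (by omega)) hqt

/-- The `k`-th coordinate of `p` in the Bernstein basis of degree `n`; only meaningful for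
`p.natDegree ≤ n`. -/
noncomputable def bernsteinCoeff (n : ℕ) (p : ℝ[X]) (k : ℕ) : ℝ :=
  p.sum fun j c ↦ c * (k.choose j / n.choose j)

lemma sum_bernsteinCoeff_mul_bernsteinPolynomial {n : ℕ} {p : ℝ[X]} (hp : p.natDegree ≤ n) :
    ∑ k ∈ Finset.range (n + 1), C (bernsteinCoeff n p k) * bernsteinPolynomial ℝ n k = p := by
  conv_rhs => rw [p.as_sum_support_C_mul_X_pow]
  simp only [bernsteinCoeff, sum_def, map_sum, Finset.sum_mul]
  rw [Finset.sum_comm]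
  refine Finset.sum_congr rfl fun j hj ↦ ?_
  rw [X_pow_eq_sum_bernsteinPolynomial ℝ ((le_natDegree_of_mem_supp j hj).trans hp),
    Finset.mul_sum]
  simp only [C_mul, mul_assoc]

lemma abs_bernsteinCoeff_sub_eval_le {n k : ℕ} {p : ℝ[X]} (hp : p.natDegree ≤ n) (hk : k ≤ n) :
    |bernsteinCoeff n p k - p.eval (k / n : ℝ)| ≤
      p.sum fun j c ↦ |c| * ∑ i ∈ Finset.range j, (i : ℝ) / (n - i) := by
  rw [eval_eq_sum, bernsteinCoeff, sum_def, sum_def, sum_def, ← Finset.sum_sub_distrib]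
  refine (Finset.abs_sum_le_sum_abs _ _).trans (Finset.sum_le_sum fun j hj ↦ ?_)
  rw [← mul_sub, abs_mul]
  gcongr
  exact abs_choose_div_choose_sub_pow_le ((le_natDegree_of_mem_supp j hj).trans hp) hk

lemma eventually_bernsteinCoeff_pos {p : ℝ[X]} (hp : ∀ x ∈ Icc (0 : ℝ) 1, 0 < p.eval x) :
    ∀ᶠ n in atTop, ∀ k ≤ n, 0 < bernsteinCoeff n p k := by
  obtain ⟨x₀, hx₀, hmin⟩ := isCompact_Icc.exists_isMinOn
    (nonempty_Icc.mpr (zero_le_one' ℝ)) p.continuous.continuousOn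
  have herror : Tendsto (fun n : ℕ ↦ p.sum fun j c ↦ |c| * ∑ i ∈ Finset.range j, (i : ℝ) / (n - i))
      atTop (𝓝 0) := by
    have hterm (i : ℕ) : Tendsto (fun n : ℕ ↦ (i : ℝ) / (n - i)) atTop (𝓝 0) :=
      tendsto_const_nhds.div_atTop
        (tendsto_atTop_add_const_right _ _ tendsto_natCast_atTop_atTop)
    simpa [sum_def] using tendsto_finsetSum p.support fun j _ ↦
      (tendsto_finsetSum (Finset.range j) fun i _ ↦ hterm i).const_mul |p.coeff j|
  filter_upwards [herror.eventually_lt_const (hp x₀ hx₀), eventually_ge_atTop p.natDegree]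
    with n hn hdeg k hk
  have hmem : (k / n : ℝ) ∈ Icc (0 : ℝ) 1 :=
    ⟨by positivity, div_le_one_of_le₀ (mod_cast hk) n.cast_nonneg⟩
  have hle : p.eval x₀ ≤ p.eval (k / n : ℝ) := hmin hmem
  linarith [neg_le_of_abs_le (abs_bernsteinCoeff_sub_eval_le hdeg hk)]

end BernsteinCoefficients

section Positivity

lemma exists_eq_X_pow_mul_one_sub_X_pow_mul {p : ℝ[X]} (hp : ∀ x ∈ Ioo (0 : ℝ) 1, 0 < p.eval x) :
    ∃ (k m : ℕ) (q : ℝ[X]), p = X ^ k * (1 - X) ^ m * q ∧ ∀ x ∈ Icc (0 : ℝ) 1, 0 < q.eval x := by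
  have hp₀ : p ≠ 0 := by
    rintro rfl
    simpa using hp (1 / 2) (by norm_num)
  obtain ⟨q₀, hq₀, hroot₀⟩ := exists_eq_pow_rootMultiplicity_mul_and_not_dvd p hp₀ 0
  obtain ⟨q₁, hq₁, hroot₁⟩ := exists_eq_pow_rootMultiplicity_mul_and_not_dvd q₀
    (by rintro rfl; simp at hroot₀) 1
  set k := p.rootMultiplicity 0
  set m := q₀.rootMultiplicity 1
  rw [dvd_iff_isRoot, IsRoot] at hroot₀ hroot₁
  have hfactor : p = X ^ k * (1 - X) ^ m * ((-1) ^ m * q₁) := by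
    have hsign : (X - C 1 : ℝ[X]) ^ m = (1 - X) ^ m * (-1) ^ m := by
      rw [← mul_pow, C_1]
      ring
    rw [hq₀, hq₁, hsign, C_0, sub_zero]
    ring
  refine ⟨k, m, (-1) ^ m * q₁, hfactor, ?_⟩
  set q := (-1) ^ m * q₁ with hq
  have hpos : ∀ x ∈ Ioo (0 : ℝ) 1, 0 < q.eval x := by
    intro x hx
    have := hp x hx
    rw [hfactor, eval_mul] at this
    refine pos_of_mul_pos_right this ?_
    simpa using mul_nonneg (pow_nonneg hx.1.le k) (pow_nonneg (sub_nonneg.mpr hx.2.le) m)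
  have hnonneg : ∀ x ∈ Icc (0 : ℝ) 1, 0 ≤ q.eval x := by
    rw [← closure_Ioo zero_ne_one]
    exact closure_minimal (fun x hx ↦ (hpos x hx).le)
      (isClosed_le continuous_const q.continuous)
  intro x hx
  refine (hnonneg x hx).lt_of_ne' ?_
  rcases hx.1.eq_or_lt with rfl | hx₀
  · intro h
    apply hroot₀
    rw [hq₁, eval_mul, (by simpa [hq] using h : q₁.eval 0 = 0), mul_zero]
  rcases hx.2.eq_or_lt with rfl | hx₁
  · simpa [hq] using hroot₁
  · exact (hpos x ⟨hx₀, hx₁⟩).ne'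

theorem momentFunctional_pos {a : ℕ → ℝ} (ha : CompletelyMonotoneSeq a) {p : ℝ[X]}
    (hp : ∀ x ∈ Ioo (0 : ℝ) 1, 0 < p.eval x) : 0 < momentFunctional a p := by
  obtain ⟨k, m, q, rfl, hq⟩ := exists_eq_X_pow_mul_one_sub_X_pow_mul hp
  obtain ⟨n, hpos, hdeg⟩ :=
    ((eventually_bernsteinCoeff_pos hq).and (eventually_ge_atTop q.natDegree)).exists
  rw [← sum_bernsteinCoeff_mul_bernsteinPolynomial hdeg, Finset.mul_sum, map_sum]
  refine Finset.sum_pos (fun i hi ↦ ?_) Finset.nonempty_range_add_one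
  have hi : i ≤ n := Finset.mem_range_succ_iff.mp hi
  have hterm : X ^ k * (1 - X) ^ m * (C (bernsteinCoeff n q i) * bernsteinPolynomial ℝ n i) =
      (bernsteinCoeff n q i * n.choose i) • (X ^ (k + i) * (1 - X) ^ (m + (n - i))) := by
    rw [bernsteinPolynomial, smul_eq_C_mul, C_mul, C_eq_natCast]
    ring
  rw [hterm, map_smul, momentFunctional_X_pow_mul_one_sub_X_pow, smul_eq_mul]
  exact mul_pos (mul_pos (hpos i hi) (mod_cast Nat.choose_pos hi)) (ha _ _)

theorem sum_mul_pos_of_completelyMonotoneSeq {α : Type*} {a : ℕ → ℝ}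
    (ha : CompletelyMonotoneSeq a) (s : Finset α) (c : α → ℝ) (e : α → ℕ)
    (h : ∀ r ∈ Ioo (0 : ℝ) 1, 0 < ∑ x ∈ s, c x * r ^ e x) : 0 < ∑ x ∈ s, c x * a (e x) := by
  have := momentFunctional_pos ha (p := ∑ x ∈ s, monomial (e x) (c x))
    (by simpa [eval_finsetSum] using h)
  simpa only [map_sum, momentFunctional_monomial] using this

end Positivity

section Fourier

variable {G : Type*} [AddCommGroup G] [Fintype G]

/-- The discrete Fourier transform of a real function, at a complex character. The character is not
conjugated, so inversion pairs `dft s ψ` with `ψ (-g)`. -/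
noncomputable def dft (s : G → ℝ) (ψ : AddChar G ℂ) : ℂ := ∑ g, s g * ψ g

/-- The real part of the eigenvalue at `ψ` of the convolution kernel `(h, g) ↦ F (g - h)`. It is the
whole eigenvalue when `F` is even; in general it is all that the quadratic form of the kernel on
real functions sees. -/
noncomputable def eigenvalue (F : G → ℝ) (ψ : AddChar G ℂ) : ℝ := ∑ x, F x * (ψ x).re

/-- The quadratic form of the convolution kernel `(h, g) ↦ F (g - h)`. -/
def convForm (F s : G → ℝ) : ℝ := ∑ h, ∑ g, s h * s g * F (g - h)

lemma sum_dft_mul_char_neg (s : G → ℝ) (g : G) :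
    ∑ ψ : AddChar G ℂ, dft s ψ * ψ (-g) = Fintype.card G * s g := by
  classical
  simp only [dft, Finset.sum_mul, mul_assoc, ← AddChar.map_add_eq_mul]
  rw [Finset.sum_comm]
  simp only [← Finset.mul_sum, AddChar.sum_apply_eq_ite, add_neg_eq_zero]
  simp [mul_comm]

lemma sum_char_mul_normSq_dft (s : G → ℝ) (x : G) :
    ∑ ψ : AddChar G ℂ, ψ x * Complex.normSq (dft s ψ) =
      Fintype.card G * ∑ h, (s h * s (h + x) : ℂ) := by
  classical
  have hconj (ψ : AddChar G ℂ) : ψ x * Complex.normSq (dft s ψ) =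
      ∑ h, s h * (dft s ψ * ψ (-(h - x))) := by
    have hx (h : G) : ψ (-(h - x)) = ψ x * starRingEnd ℂ (ψ h) := by
      rw [neg_sub, sub_eq_add_neg, AddChar.map_add_eq_mul, AddChar.map_neg_eq_conj]
    have hdft : starRingEnd ℂ (dft s ψ) = ∑ h, s h * starRingEnd ℂ (ψ h) := by simp [dft]
    rw [← Complex.mul_conj, hdft, Finset.mul_sum, Finset.mul_sum]
    refine Finset.sum_congr rfl fun h _ ↦ ?_
    rw [hx]
    ring
  simp only [hconj]
  rw [Finset.sum_comm, Finset.mul_sum, ← Equiv.sum_comp (Equiv.addRight x)]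
  refine Finset.sum_congr rfl fun h _ ↦ ?_
  rw [← Finset.mul_sum, sum_dft_mul_char_neg, Equiv.coe_addRight, add_sub_cancel_right]
  ring

lemma eigenvalue_sub_eigenvalue [DecidableEq G] (F : G → ℝ) (ψ χ : AddChar G ℂ) :
    eigenvalue F ψ - eigenvalue F χ =
      ∑ x ∈ Finset.univ.erase 0, ((ψ x).re - (χ x).re) * F x := by
  rw [eigenvalue, eigenvalue, ← Finset.sum_sub_distrib,
    ← Finset.add_sum_erase _ _ (Finset.mem_univ 0)]
  simp only [AddChar.map_zero_eq_one, sub_self, zero_add, ← mul_sub, mul_comm]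

lemma sum_eigenvalue_mul_normSq_dft (F s : G → ℝ) :
    ∑ ψ : AddChar G ℂ, eigenvalue F ψ * Complex.normSq (dft s ψ) =
      Fintype.card G * convForm F s := by
  have hauto (x : G) : ∑ ψ : AddChar G ℂ, (ψ x).re * Complex.normSq (dft s ψ) =
      Fintype.card G * ∑ h, s h * s (h + x) := by
    have := congrArg Complex.re (sum_char_mul_normSq_dft s x)
    rw [Complex.re_sum] at this
    simp only [Complex.re_mul_ofReal] at this
    rw [this]
    exact_mod_cast Complex.ofReal_re _
  have hshift (h : G) : ∑ g, s h * s g * F (g - h) = ∑ x, F x * (s h * s (h + x)) := by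
    rw [← Equiv.sum_comp (Equiv.addLeft h)]
    exact Finset.sum_congr rfl fun x _ ↦ by simp [mul_comm]
  calc ∑ ψ : AddChar G ℂ, eigenvalue F ψ * Complex.normSq (dft s ψ)
      = ∑ x, F x * ∑ ψ : AddChar G ℂ, (ψ x).re * Complex.normSq (dft s ψ) := by
        simp only [eigenvalue, Finset.sum_mul, Finset.mul_sum, mul_assoc]
        exact Finset.sum_comm
    _ = Fintype.card G * ∑ x, F x * ∑ h, s h * s (h + x) := by
        simp only [hauto, Finset.mul_sum, mul_left_comm]
    _ = Fintype.card G * convForm F s := by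
        simp only [convForm, hshift, Finset.mul_sum]
        rw [Finset.sum_comm]

lemma sum_normSq_dft (s : G → ℝ) :
    ∑ ψ : AddChar G ℂ, Complex.normSq (dft s ψ) = Fintype.card G * ∑ h, s h ^ 2 := by
  have := sum_char_mul_normSq_dft s 0
  simp only [AddChar.map_zero_eq_one, one_mul, add_zero, ← sq] at this
  exact_mod_cast this

variable {F : G → ℝ} {χ : AddChar G ℂ}

lemma card_mul_convForm_sub (F s : G → ℝ) (χ : AddChar G ℂ) :
    Fintype.card G * (convForm F s - eigenvalue F χ * ∑ h, s h ^ 2) =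
      ∑ ψ : AddChar G ℂ, (eigenvalue F ψ - eigenvalue F χ) * Complex.normSq (dft s ψ) := by
  simp only [sub_mul, Finset.sum_sub_distrib, ← Finset.mul_sum, sum_normSq_dft,
    sum_eigenvalue_mul_normSq_dft]
  ring

lemma eigenvalue_le_of_forall_ne_lt (hχ : ∀ ψ, ψ ≠ χ → eigenvalue F χ < eigenvalue F ψ)
    (ψ : AddChar G ℂ) : eigenvalue F χ ≤ eigenvalue F ψ := by
  obtain rfl | hψ := eq_or_ne ψ χ
  exacts [le_rfl, (hχ ψ hψ).le]

lemma eigenvalue_mul_sum_sq_le_convForm (hχ : ∀ ψ, eigenvalue F χ ≤ eigenvalue F ψ) (s : G → ℝ) :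
    eigenvalue F χ * ∑ h, s h ^ 2 ≤ convForm F s := by
  have hcard : (0 : ℝ) < Fintype.card G := mod_cast Fintype.card_pos
  rw [← sub_nonneg, ← mul_nonneg_iff_of_pos_left hcard, card_mul_convForm_sub]
  exact Finset.sum_nonneg fun ψ _ ↦
    mul_nonneg (sub_nonneg.mpr (hχ ψ)) (Complex.normSq_nonneg _)

lemma eq_const_mul_char_of_convForm_eq (hχ : ∀ ψ, ψ ≠ χ → eigenvalue F χ < eigenvalue F ψ)
    {s : G → ℝ} (hs : convForm F s = eigenvalue F χ * ∑ h, s h ^ 2) (g : G) :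
    (s g : ℂ) = s 0 * χ (-g) := by
  have hsum := card_mul_convForm_sub F s χ
  rw [hs, sub_self, mul_zero, eq_comm, Finset.sum_eq_zero_iff_of_nonneg] at hsum
  swap
  · exact fun ψ _ ↦ mul_nonneg (sub_nonneg.mpr (eigenvalue_le_of_forall_ne_lt hχ ψ))
      (Complex.normSq_nonneg _)
  have hzero (ψ : AddChar G ℂ) (hψ : ψ ≠ χ) : dft s ψ = 0 :=
    Complex.normSq_eq_zero.mp <|
      (mul_eq_zero.mp (hsum ψ (Finset.mem_univ ψ))).resolve_left (sub_pos.mpr (hχ ψ hψ)).ne'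
  have hinv (g : G) : Fintype.card G * (s g : ℂ) = dft s χ * χ (-g) := by
    rw [← sum_dft_mul_char_neg]
    exact Finset.sum_eq_single χ (fun ψ _ hψ ↦ by rw [hzero ψ hψ, zero_mul]) (by simp)
  have hcard : (Fintype.card G : ℂ) ≠ 0 := mod_cast Fintype.card_ne_zero
  apply mul_left_cancel₀ hcard
  rw [hinv, ← mul_assoc, hinv, neg_zero, AddChar.map_zero_eq_one, mul_one]

end Fourier

section SignVector

variable {G : Type*} [Fintype G] [DecidableEq G]

/-- The `±1`-valued indicator of `S`. -/
def signVector (S : Finset G) (g : G) : ℝ := if g ∈ S then 1 else -1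

lemma sum_signVector {S : Finset G} (hS : 2 * S.card = Fintype.card G) :
    ∑ g, signVector S g = 0 := by
  have hind (g : G) : signVector S g = 2 * (if g ∈ S then 1 else 0) - 1 := by
    unfold signVector
    split_ifs <;> norm_num
  have hcard : (2 * S.card : ℝ) = Fintype.card G := mod_cast hS
  simp only [hind, Finset.sum_sub_distrib, ← Finset.mul_sum, Finset.sum_boole,
    Finset.filter_univ_mem, Finset.sum_const, Finset.card_univ, nsmul_eq_mul, hcard, mul_one,
    sub_self]

lemma sum_signVector_sq (S : Finset G) : ∑ g, signVector S g ^ 2 = Fintype.card G := by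
  have hsq (g : G) : signVector S g ^ 2 = 1 := by
    unfold signVector
    split_ifs <;> norm_num
  simp [hsq]

end SignVector

section HalfSizeSubsets

variable {G : Type*} [AddCommGroup G]

/-- The energy felt by the point `h` when the points of `S` interact through `F`, with the
self-interaction `F 0` included. -/
def pointEnergy (F : G → ℝ) (S : Finset G) (h : G) : ℝ := ∑ g ∈ S, F (g - h)

/-- `S` is one of the two level sets `{σ = 1}` and `{σ = -1}` of the real character `σ`. -/
def IsLevelSet (σ : AddChar G ℝ) (S : Finset G) : Prop :=
  (∀ g, g ∈ S ↔ σ g = 1) ∨ ∀ g, g ∈ S ↔ σ g = -1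

/-- A real character, with values viewed in `ℂ`. -/
noncomputable def complexify (σ : AddChar G ℝ) : AddChar G ℂ :=
  (Complex.ofRealHom : ℝ →* ℂ).compAddChar σ

lemma complexify_apply (σ : AddChar G ℝ) (g : G) : complexify σ g = σ g := rfl

lemma realChar_eq_one_or_neg_one [Finite G] (σ : AddChar G ℝ) (g : G) : σ g = 1 ∨ σ g = -1 :=
  eq_or_eq_neg_of_abs_eq (AddChar.norm_apply σ g)

lemma sum_pointEnergy_le_card_mul_sup' (F : G → ℝ) {S : Finset G} (hne : S.Nonempty) :
    ∑ h ∈ S, pointEnergy F S h ≤ S.card * S.sup' hne (pointEnergy F S) := by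
  rw [← nsmul_eq_mul]
  exact Finset.sum_le_card_nsmul S _ _ fun h hh ↦ Finset.le_sup' _ hh

variable [Fintype G]

/-- The sum of `F` over the kernel of `σ`, whose indicator function is `(1 + σ) / 2` because `σ`
takes only the values `1` and `-1`. -/
noncomputable def kernelSum (F : G → ℝ) (σ : AddChar G ℝ) : ℝ := ∑ x, F x * ((1 + σ x) / 2)

lemma two_mul_card_of_isLevelSet {σ : AddChar G ℝ} (hσ : σ ≠ 0) {S : Finset G}
    (hS : IsLevelSet σ S) : 2 * S.card = Fintype.card G := by
  classical
  have hsum : ∑ g, σ g = 0 := AddChar.sum_eq_zero_iff_ne_zero.mpr hσ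
  have hsign : ∃ ε : ℝ, ∀ g, 2 * (if g ∈ S then 1 else 0) = 1 + ε * σ g := by
    rcases hS with hS | hS
    · refine ⟨1, fun g ↦ ?_⟩
      rcases realChar_eq_one_or_neg_one σ g with hg | hg <;> norm_num [hS, hg]
    · refine ⟨-1, fun g ↦ ?_⟩
      rcases realChar_eq_one_or_neg_one σ g with hg | hg <;> norm_num [hS, hg]
  obtain ⟨ε, hε⟩ := hsign
  have hcard := Fintype.sum_congr _ _ hε
  rw [← Finset.mul_sum, Finset.sum_add_distrib, ← Finset.mul_sum, hsum] at hcard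
  simp only [Finset.sum_boole, Finset.filter_univ_mem, Finset.sum_const, Finset.card_univ,
    nsmul_eq_mul, mul_one, mul_zero, add_zero] at hcard
  exact_mod_cast hcard

lemma pointEnergy_of_isLevelSet (F : G → ℝ) {σ : AddChar G ℝ} {S : Finset G}
    (hS : IsLevelSet σ S) {h : G} (hh : h ∈ S) : pointEnergy F S h = kernelSum F σ := by
  classical
  have hmem (g : G) : g ∈ S ↔ σ g = σ h := by
    rcases hS with hS | hS <;> rw [(hS h).mp hh, hS]
  rw [pointEnergy, kernelSum, ← Equiv.sum_comp (Equiv.subRight h), ← Finset.sum_ite_mem_eq]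
  refine Finset.sum_congr rfl fun g _ ↦ ?_
  rw [Equiv.subRight_apply, AddChar.map_sub_eq_div]
  simp only [hmem]
  rcases realChar_eq_one_or_neg_one σ g with hg | hg <;>
    rcases realChar_eq_one_or_neg_one σ h with hh | hh <;> norm_num [hg, hh]

lemma four_mul_sum_pointEnergy [DecidableEq G] (F : G → ℝ) {S : Finset G}
    (hS : 2 * S.card = Fintype.card G) :
    4 * ∑ h ∈ S, pointEnergy F S h =
      Fintype.card G * ∑ x, F x + convForm F (signVector S) := by
  have hrow (h : G) : ∑ g, F (g - h) = ∑ x, F x := (Equiv.subRight h).sum_comp F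
  have hcol (g : G) : ∑ h, F (g - h) = ∑ x, F x := (Equiv.subLeft g).sum_comp F
  have hind : ∑ h ∈ S, pointEnergy F S h =
      ∑ h, ∑ g, if h ∈ S ∧ g ∈ S then F (g - h) else 0 := by
    simp [pointEnergy, ite_and]
  have hexpand (h g : G) : 4 * (if h ∈ S ∧ g ∈ S then F (g - h) else 0) =
      F (g - h) + signVector S h * F (g - h) + signVector S g * F (g - h) +
        signVector S h * signVector S g * F (g - h) := by
    unfold signVector
    by_cases hh : h ∈ S <;> by_cases hg : g ∈ S <;> simp only [hh, hg, and_self, and_true,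
      and_false, if_true, if_false] <;> ring
  have hzero : ∑ h, ∑ g, signVector S h * F (g - h) = 0 := by
    simp only [← Finset.mul_sum, hrow, ← Finset.sum_mul, sum_signVector hS, zero_mul]
  have hzero' : ∑ h, ∑ g, signVector S g * F (g - h) = 0 := by
    rw [Finset.sum_comm]
    simp only [← Finset.mul_sum, hcol, ← Finset.sum_mul, sum_signVector hS, zero_mul]
  rw [hind]
  simp only [Finset.mul_sum, hexpand, Finset.sum_add_distrib, hzero, hzero', add_zero, convForm]
  simp [hrow, Finset.mul_sum]

lemma two_mul_kernelSum (F : G → ℝ) (σ : AddChar G ℝ) :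
    2 * kernelSum F σ = ∑ x, F x + eigenvalue F (complexify σ) := by
  rw [kernelSum, eigenvalue, Finset.mul_sum, ← Finset.sum_add_distrib]
  refine Finset.sum_congr rfl fun x _ ↦ ?_
  rw [complexify_apply, Complex.ofReal_re]
  ring

variable {F : G → ℝ} {σ : AddChar G ℝ} {S : Finset G}

lemma four_mul_card_mul_kernelSum (F : G → ℝ) (σ : AddChar G ℝ)
    (hS : 2 * S.card = Fintype.card G) :
    4 * (S.card * kernelSum F σ) = Fintype.card G * ∑ x, F x +
      eigenvalue F (complexify σ) * Fintype.card G := by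
  have hcard : (2 * S.card : ℝ) = Fintype.card G := mod_cast hS
  linear_combination 2 * S.card * two_mul_kernelSum F σ +
    (∑ x, F x + eigenvalue F (complexify σ)) * hcard

theorem card_mul_kernelSum_le_sum_pointEnergy
    (hσ : ∀ ψ, eigenvalue F (complexify σ) ≤ eigenvalue F ψ)
    (hS : 2 * S.card = Fintype.card G) :
    S.card * kernelSum F σ ≤ ∑ h ∈ S, pointEnergy F S h := by
  classical
  have hform := eigenvalue_mul_sum_sq_le_convForm hσ (signVector S)
  rw [sum_signVector_sq] at hform
  linarith [four_mul_sum_pointEnergy F hS, four_mul_card_mul_kernelSum F σ hS]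

theorem sum_pointEnergy_eq_iff_isLevelSet
    (hσ : ∀ ψ, ψ ≠ complexify σ → eigenvalue F (complexify σ) < eigenvalue F ψ)
    (hS : 2 * S.card = Fintype.card G) :
    ∑ h ∈ S, pointEnergy F S h = S.card * kernelSum F σ ↔ IsLevelSet σ S := by
  classical
  constructor
  · intro heq
    have hform : convForm F (signVector S) =
        eigenvalue F (complexify σ) * ∑ h, signVector S h ^ 2 := by
      rw [sum_signVector_sq]
      linarith [four_mul_sum_pointEnergy F hS, four_mul_card_mul_kernelSum F σ hS]
    have hsign (g : G) : signVector S g = signVector S 0 * σ g := by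
      have hneg : σ (-g) = σ g := by
        rw [AddChar.map_neg_eq_inv]
        rcases realChar_eq_one_or_neg_one σ g with hg | hg <;> norm_num [hg]
      have := eq_const_mul_char_of_convForm_eq hσ hform g
      rw [complexify_apply, hneg] at this
      exact_mod_cast this
    have hmem (g : G) : g ∈ S ↔ signVector S g = 1 := by
      unfold signVector
      split_ifs with hg <;> norm_num [hg]
    by_cases h0 : (0 : G) ∈ S
    · exact .inl fun g ↦ by rw [hmem, hsign, signVector, if_pos h0, one_mul]
    · refine .inr fun g ↦ ?_
      rw [hmem, hsign, signVector, if_neg h0, neg_one_mul, neg_eq_iff_eq_neg]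
  · intro hlevel
    rw [Finset.sum_congr rfl fun h hh ↦ pointEnergy_of_isLevelSet F hlevel hh, Finset.sum_const,
      nsmul_eq_mul]

theorem kernelSum_le_sup'_pointEnergy
    (hσ : ∀ ψ, eigenvalue F (complexify σ) ≤ eigenvalue F ψ)
    (hS : 2 * S.card = Fintype.card G) (hne : S.Nonempty) :
    kernelSum F σ ≤ S.sup' hne (pointEnergy F S) :=
  le_of_mul_le_mul_left ((card_mul_kernelSum_le_sum_pointEnergy hσ hS).trans
    (sum_pointEnergy_le_card_mul_sup' F hne)) (mod_cast hne.card_pos)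

theorem sup'_pointEnergy_eq_iff_isLevelSet
    (hσ : ∀ ψ, ψ ≠ complexify σ → eigenvalue F (complexify σ) < eigenvalue F ψ)
    (hS : 2 * S.card = Fintype.card G) (hne : S.Nonempty) :
    S.sup' hne (pointEnergy F S) = kernelSum F σ ↔ IsLevelSet σ S := by
  constructor
  · intro heq
    rw [← sum_pointEnergy_eq_iff_isLevelSet hσ hS]
    exact ((sum_pointEnergy_le_card_mul_sup' F hne).trans_eq (by rw [heq])).antisymm
      (card_mul_kernelSum_le_sum_pointEnergy (eigenvalue_le_of_forall_ne_lt hσ) hS)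
  · intro hlevel
    rw [Finset.sup'_congr hne rfl fun h hh ↦ pointEnergy_of_isLevelSet F hlevel hh,
      Finset.sup'_const]

end HalfSizeSubsets

section CyclicGroup

open scoped ComplexOrder

/-- The Lee weight of a residue: its distance to `0` around the cycle. -/
def leeWeight {n : ℕ} (a : ZMod n) : ℕ := min a.val (n - a.val)

/-- The Fourier transform of `a ↦ r ^ leeWeight a` on a cyclic group. -/
noncomputable def leeTransform {n : ℕ} [NeZero n] (r : ℝ) (ψ : AddChar (ZMod n) ℂ) : ℂ :=
  ∑ a, r ^ leeWeight a * ψ a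

lemma sum_pow_min_mul_pow {R : Type*} [CommRing R] (r : R) {z w : R} {m : ℕ} (hzw : z * w = 1)
    (hz : z ^ (2 * m) = 1) :
    (∑ k ∈ Finset.range (2 * m), r ^ min k (2 * m - k) * z ^ k) * ((1 - r * z) * (1 - r * w)) =
      (1 - r ^ 2) * (1 - r ^ m * z ^ m) := by
  have hwz (k : ℕ) : w ^ k * z ^ k = 1 := by rw [← mul_pow, mul_comm w, hzw, one_pow]
  have hwm : w ^ m = z ^ m := by
    rw [two_mul, pow_add] at hz
    linear_combination z ^ m * hwz m - w ^ m * hz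
  have hlow : ∑ k ∈ Finset.range m, r ^ min k (2 * m - k) * z ^ k =
      ∑ k ∈ Finset.range m, (r * z) ^ k := by
    refine Finset.sum_congr rfl fun k hk ↦ ?_
    rw [Finset.mem_range] at hk
    rw [min_eq_left (by omega), mul_pow]
  have hhigh : ∑ k ∈ Finset.range m, r ^ min (m + k) (2 * m - (m + k)) * z ^ (m + k) =
      r * w * ∑ k ∈ Finset.range m, (r * w) ^ k := by
    rw [← Finset.sum_range_reflect, Finset.mul_sum]
    refine Finset.sum_congr rfl fun k hk ↦ ?_
    rw [Finset.mem_range] at hk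
    have hexp : m + (m - 1 - k) + (k + 1) = 2 * m := by omega
    have hpow : z ^ (m + (m - 1 - k)) = w ^ (k + 1) := by
      rw [← hexp, pow_add] at hz
      linear_combination w ^ (k + 1) * hz - z ^ (m + (m - 1 - k)) * hwz (k + 1)
    rw [hpow, (by omega : min (m + (m - 1 - k)) (2 * m - (m + (m - 1 - k))) = k + 1), ← mul_pow,
      pow_succ']
  have hgeom_z := geom_sum_mul_neg (r * z) m
  have hgeom_w := geom_sum_mul_neg (r * w) m
  rw [mul_pow] at hgeom_z hgeom_w
  rw [hwm] at hgeom_w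
  rw [two_mul m, Finset.sum_range_add, ← two_mul m, hlow, hhigh]
  linear_combination (1 - r * w) * hgeom_z + r * w * (1 - r * z) * hgeom_w -
    r ^ 2 * (1 - r ^ m * z ^ m) * hzw

variable {n : ℕ}

lemma zmod_char_one_pow (ψ : AddChar (ZMod n) ℂ) : ψ 1 ^ n = 1 := by
  rw [← AddChar.map_nsmul_eq_pow, nsmul_one, ZMod.natCast_self, AddChar.map_zero_eq_one]

variable [NeZero n]

lemma zmod_char_apply_eq_pow (ψ : AddChar (ZMod n) ℂ) (a : ZMod n) : ψ a = ψ 1 ^ a.val := by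
  rw [← AddChar.map_nsmul_eq_pow, nsmul_one, ZMod.natCast_zmod_val]

lemma zmod_char_ext {ψ χ : AddChar (ZMod n) ℂ} (h : ψ 1 = χ 1) : ψ = χ := by
  ext a
  rw [zmod_char_apply_eq_pow, h, ← zmod_char_apply_eq_pow]

lemma leeTransform_eq_sum_range (r : ℝ) (ψ : AddChar (ZMod n) ℂ) :
    leeTransform r ψ = ∑ k ∈ Finset.range n, (r : ℂ) ^ min k (n - k) * ψ 1 ^ k :=
  Finset.sum_nbij' ZMod.val (Nat.cast : ℕ → ZMod n)
    (fun a _ ↦ Finset.mem_range.mpr a.val_lt) (fun _ _ ↦ Finset.mem_univ _)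
    (fun a _ ↦ ZMod.natCast_zmod_val a)
    (fun _ hk ↦ ZMod.val_cast_of_lt (Finset.mem_range.mp hk))
    (fun a _ ↦ by rw [zmod_char_apply_eq_pow ψ a, leeWeight])

variable {m : ℕ} {r : ℝ} {ψ χ : AddChar (ZMod n) ℂ}

lemma leeTransform_mul_normSq (hn : n = 2 * m) (r : ℝ) (ψ : AddChar (ZMod n) ℂ) :
    leeTransform r ψ * Complex.normSq (1 - r * ψ 1) = (1 - r ^ 2) * (1 - r ^ m * ψ 1 ^ m) := by
  subst hn
  have hconj : ψ 1 * starRingEnd ℂ (ψ 1) = 1 := by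
    rw [← AddChar.map_neg_eq_conj, ← AddChar.map_add_eq_mul, add_neg_cancel,
      AddChar.map_zero_eq_one]
  rw [leeTransform_eq_sum_range, ← Complex.mul_conj]
  simp only [map_sub, map_one, map_mul, Complex.conj_ofReal]
  exact sum_pow_min_mul_pow (r : ℂ) hconj (zmod_char_one_pow ψ)

lemma normSq_one_sub_mul_zmod_char (r : ℝ) (ψ : AddChar (ZMod n) ℂ) :
    Complex.normSq (1 - r * ψ 1) = 1 + r ^ 2 - 2 * r * (ψ 1).re := by
  have hnorm : Complex.normSq (ψ 1) = 1 := by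
    rw [Complex.normSq_eq_norm_sq, AddChar.norm_apply, one_pow]
  rw [Complex.normSq_sub, Complex.normSq_mul, hnorm]
  simp only [map_one, Complex.normSq_ofReal, map_mul, Complex.conj_ofReal, one_mul,
    Complex.re_ofReal_mul, Complex.conj_re]
  ring

lemma one_add_sq_sub_two_mul_re_pos (hr : r ∈ Ioo (0 : ℝ) 1) (ψ : AddChar (ZMod n) ℂ) :
    0 < 1 + r ^ 2 - 2 * r * (ψ 1).re := by
  have hre : (ψ 1).re ≤ 1 := (Complex.re_le_norm _).trans_eq (AddChar.norm_apply ψ 1)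
  nlinarith [hr.1, sq_pos_of_pos (sub_pos.mpr hr.2)]

lemma exists_leeTransform_eq_ofReal (hn : n = 2 * m) (hr : r ∈ Ioo (0 : ℝ) 1)
    (ψ : AddChar (ZMod n) ℂ) : ∃ ε : ℝ, ε ≤ 1 ∧ ψ 1 ^ m = ε ∧
      leeTransform r ψ =
        ((1 - r ^ 2) * (1 - r ^ m * ε) / (1 + r ^ 2 - 2 * r * (ψ 1).re) : ℝ) := by
  have hsq : ψ 1 ^ m = 1 ∨ ψ 1 ^ m = -1 :=
    mul_self_eq_one_iff.mp (by rw [← pow_add, ← two_mul, ← hn, zmod_char_one_pow])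
  have hε : ∃ ε : ℝ, ε ≤ 1 ∧ ψ 1 ^ m = ε := by
    rcases hsq with h | h
    exacts [⟨1, le_rfl, by simp [h]⟩, ⟨-1, by norm_num, by simp [h]⟩]
  obtain ⟨ε, hle, hε⟩ := hε
  refine ⟨ε, hle, hε, ?_⟩
  have hmul := leeTransform_mul_normSq hn r ψ
  rw [normSq_one_sub_mul_zmod_char, hε] at hmul
  rw [Complex.ofReal_div, eq_div_iff (mod_cast (one_add_sq_sub_two_mul_re_pos hr ψ).ne'), hmul]
  push_cast
  rfl

lemma leeTransform_two (hn : n = 2) (r : ℝ) (ψ : AddChar (ZMod n) ℂ) :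
    leeTransform r ψ = 1 + r * ψ 1 := by
  subst hn
  simp [leeTransform_eq_sum_range, Finset.sum_range_succ]

lemma neg_one_lt_re_zmod_char_one (hχ : χ 1 = -1) (hψ : ψ ≠ χ) : -1 < (ψ 1).re := by
  have hnorm : ‖ψ 1‖ = 1 := AddChar.norm_apply ψ 1
  refine (neg_le_of_abs_le ((Complex.abs_re_le_norm _).trans_eq hnorm)).lt_of_ne fun hre ↦ ?_
  refine hψ (zmod_char_ext ?_)
  rw [hχ]
  have him : (ψ 1).im = 0 := by
    have := Complex.sq_norm_sub_sq_re (ψ 1)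
    rw [hnorm, ← hre] at this
    nlinarith
  exact Complex.ext (by simp [← hre]) (by simp [him])

theorem leeTransform_pos (hn : n = 2 ∨ 4 ∣ n) (hr : r ∈ Ioo (0 : ℝ) 1) (hχ : χ 1 = -1) :
    0 < leeTransform r χ := by
  rcases hn with hn | ⟨l, hn⟩
  · rw [leeTransform_two hn, hχ, mul_neg_one, ← sub_eq_add_neg]
    exact_mod_cast sub_pos.mpr hr.2
  · obtain ⟨ε, hε, -, hT⟩ := exists_leeTransform_eq_ofReal (m := 2 * l) (by omega) hr χ
    rw [hT, Complex.zero_lt_real]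
    have hpow : r ^ (2 * l) < 1 := pow_lt_one₀ hr.1.le hr.2 (by have := NeZero.ne n; omega)
    have hpow₀ : 0 < r ^ (2 * l) := pow_pos hr.1 _
    have hsq : 0 < 1 - r ^ 2 := by nlinarith [hr.1, hr.2]
    have hnum : 0 < 1 - r ^ (2 * l) * ε := by nlinarith
    exact div_pos (mul_pos hsq hnum) (one_add_sq_sub_two_mul_re_pos hr χ)

theorem leeTransform_lt (hn : n = 2 ∨ 4 ∣ n) (hr : r ∈ Ioo (0 : ℝ) 1) (hχ : χ 1 = -1)
    (hψ : ψ ≠ χ) : leeTransform r χ < leeTransform r ψ := by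
  rcases hn with hn | ⟨l, hn⟩
  · have hψ₁ : ψ 1 = 1 := by
      have hsq : ψ 1 * ψ 1 = 1 := by rw [← sq, ← hn, zmod_char_one_pow]
      exact (mul_self_eq_one_iff.mp hsq).resolve_right fun h ↦ hψ (zmod_char_ext (h.trans hχ.symm))
    rw [leeTransform_two hn, leeTransform_two hn, hχ, hψ₁]
    have : 1 + r * -1 < 1 + r * 1 := by linarith [hr.1]
    exact_mod_cast this
  · obtain ⟨ε, -, hε, hTχ⟩ := exists_leeTransform_eq_ofReal (m := 2 * l) (by omega) hr χ
    obtain ⟨δ, hδ, -, hTψ⟩ := exists_leeTransform_eq_ofReal (m := 2 * l) (by omega) hr ψ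
    obtain rfl : ε = 1 := by
      rw [hχ, (even_two_mul l).neg_one_pow] at hε
      exact_mod_cast hε.symm
    have hre := neg_one_lt_re_zmod_char_one hχ hψ
    have hpow : r ^ (2 * l) < 1 := pow_lt_one₀ hr.1.le hr.2 (by have := NeZero.ne n; omega)
    have hsq : 0 < 1 - r ^ 2 := by nlinarith [hr.1, hr.2]
    have hδ' : r ^ (2 * l) * δ ≤ r ^ (2 * l) :=
      mul_le_of_le_one_right (pow_nonneg hr.1.le _) hδ
    rw [hTχ, hTψ, mul_one, Complex.real_lt_real]
    refine div_lt_div₀' (mul_le_mul_of_nonneg_left (by linarith) hsq.le) ?_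
      (mul_pos hsq (by linarith)) (one_add_sq_sub_two_mul_re_pos hr ψ)
    rw [hχ, Complex.neg_re, Complex.one_re]
    nlinarith [hr.1]

end CyclicGroup

section Torus

open scoped ComplexOrder

variable {ι : Type*} [Fintype ι] {n : ι → ℕ}

/-- The Lee norm on a discrete torus: the Lee distance to `0`. -/
def leeNorm (x : ∀ i, ZMod (n i)) : ℕ := ∑ i, leeWeight (x i)

lemma leeNorm_pos [∀ i, NeZero (n i)] {x : ∀ i, ZMod (n i)} (hx : x ≠ 0) : 0 < leeNorm x := by
  obtain ⟨i, hi⟩ := Function.ne_iff.mp hx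
  have hval : (x i).val ≠ 0 := (ZMod.val_ne_zero _).mpr hi
  refine Finset.sum_pos' (fun _ _ ↦ Nat.zero_le _) ⟨i, Finset.mem_univ i, ?_⟩
  exact lt_min (Nat.pos_of_ne_zero hval) (Nat.sub_pos_of_lt (x i).val_lt)

lemma neg_one_pow_val_add {R : Type*} [Ring R] {m : ℕ} [NeZero m] (hm : Even m) (a b : ZMod m) :
    (-1 : R) ^ (a + b).val = (-1) ^ a.val * (-1) ^ b.val := by
  rw [ZMod.val_add, ← pow_add]
  conv_rhs => rw [← Nat.mod_add_div (a.val + b.val) m]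
  rw [pow_add, pow_mul, hm.neg_one_pow, one_pow, mul_one]

/-- The character `x ↦ (-1) ^ ∑ i, x i`, whose level sets are the two checkerboards. -/
def parityChar [∀ i, NeZero (n i)] (hn : ∀ i, Even (n i)) : AddChar (∀ i, ZMod (n i)) ℝ where
  toFun x := (-1) ^ ∑ i, (x i).val
  map_zero_eq_one' := by simp
  map_add_eq_mul' x y := by
    simp only [← Finset.prod_pow_eq_pow_sum, ← Finset.prod_mul_distrib, Pi.add_apply,
      neg_one_pow_val_add (hn _)]

variable [DecidableEq ι]

/-- The restriction of a character of a product of cyclic groups to the `i`-th factor. -/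
def coordChar (ψ : AddChar (∀ i, ZMod (n i)) ℂ) (i : ι) : AddChar (ZMod (n i)) ℂ :=
  ψ.compAddMonoidHom (AddMonoidHom.single (fun i ↦ ZMod (n i)) i)

lemma prod_coordChar (ψ : AddChar (∀ i, ZMod (n i)) ℂ) (x : ∀ i, ZMod (n i)) :
    ∏ i, coordChar ψ i (x i) = ψ x := by
  conv_rhs => rw [← Finset.univ_sum_single x]
  exact (map_prod ψ.toMonoidHom (fun i ↦ .ofAdd (Pi.single i (x i))) Finset.univ).symm

lemma coordChar_injective {ι : Type*} [Finite ι] [DecidableEq ι] {n : ι → ℕ} :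
    Function.Injective (coordChar : AddChar (∀ i, ZMod (n i)) ℂ → ∀ i, AddChar (ZMod (n i)) ℂ) := by
  intro ψ χ h
  cases nonempty_fintype ι
  ext x
  rw [← prod_coordChar ψ, ← prod_coordChar χ, h]

variable [∀ i, NeZero (n i)]

lemma parityChar_single_one (hn : ∀ i, Even (n i)) (i : ι) :
    parityChar hn (Pi.single i 1) = -1 := by
  have hone : (1 : ZMod (n i)).val = 1 := by
    have := NeZero.ne (n i)
    obtain ⟨k, hk⟩ := hn i
    rw [ZMod.val_one_eq_one_mod, Nat.mod_eq_of_lt (by omega)]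
  have hsum : ∑ j, ((Pi.single i 1 : ∀ i, ZMod (n i)) j).val = 1 := by
    rw [Finset.sum_eq_single i (fun j _ hj ↦ by rw [Pi.single_eq_of_ne hj, ZMod.val_zero])
      (by simp), Pi.single_eq_same, hone]
  change (-1 : ℝ) ^ _ = -1
  rw [hsum, pow_one]

lemma coordChar_parityChar_one (hn : ∀ i, Even (n i)) (i : ι) :
    coordChar (complexify (parityChar hn)) i 1 = -1 := by
  change ((parityChar hn (Pi.single i 1) : ℝ) : ℂ) = -1
  rw [parityChar_single_one, Complex.ofReal_neg, Complex.ofReal_one]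

lemma sum_pow_leeNorm_mul_char (r : ℝ) (ψ : AddChar (∀ i, ZMod (n i)) ℂ) :
    ∑ x, (r : ℂ) ^ leeNorm x * ψ x = ∏ i, leeTransform r (coordChar ψ i) := by
  simp only [leeTransform, Finset.prod_univ_sum, Fintype.piFinset_univ, leeNorm,
    Finset.prod_mul_distrib, Finset.prod_pow_eq_pow_sum, prod_coordChar]

lemma eigenvalue_pow_leeNorm (r : ℝ) (ψ : AddChar (∀ i, ZMod (n i)) ℂ) :
    eigenvalue (fun x ↦ r ^ leeNorm x) ψ = (∏ i, leeTransform r (coordChar ψ i)).re := by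
  rw [← sum_pow_leeNorm_mul_char, Complex.re_sum, eigenvalue]
  exact Finset.sum_congr rfl fun x _ ↦ by rw [← Complex.ofReal_pow, Complex.re_ofReal_mul]

lemma even_of_eq_two_or_four_dvd {m : ℕ} (hm : m = 2 ∨ 4 ∣ m) : Even m := by
  rcases hm with rfl | h
  exacts [even_two, even_iff_two_dvd.mpr ((by norm_num : 2 ∣ 4).trans h)]

lemma eigenvalue_pow_leeNorm_lt (hn : ∀ i, n i = 2 ∨ 4 ∣ n i) {r : ℝ} (hr : r ∈ Ioo (0 : ℝ) 1)
    {χ ψ : AddChar (∀ i, ZMod (n i)) ℂ} (hχ : ∀ i, coordChar χ i 1 = -1) (hψ : ψ ≠ χ) :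
    eigenvalue (fun x ↦ r ^ leeNorm x) χ < eigenvalue (fun x ↦ r ^ leeNorm x) ψ := by
  obtain ⟨i, hi⟩ := Function.ne_iff.mp (coordChar_injective.ne hψ)
  have hle (j : ι) : leeTransform r (coordChar χ j) ≤ leeTransform r (coordChar ψ j) := by
    by_cases hj : coordChar ψ j = coordChar χ j
    · rw [hj]
    · exact (leeTransform_lt (hn j) hr (hχ j) hj).le
  rw [eigenvalue_pow_leeNorm, eigenvalue_pow_leeNorm]
  refine (Complex.lt_def.mp ?_).1
  exact Finset.prod_lt_prod (fun j _ ↦ leeTransform_pos (hn j) hr (hχ j)) (fun j _ ↦ hle j)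
    ⟨i, Finset.mem_univ i, leeTransform_lt (hn i) hr (hχ i) hi⟩

/-- The interaction kernel of a potential `u` of the Lee norm, without self-interaction. -/
def leeKernel (u : ℕ → ℝ) (x : ∀ i, ZMod (n i)) : ℝ := if x = 0 then 0 else u (leeNorm x)

theorem eigenvalue_leeKernel_lt (hn : ∀ i, n i = 2 ∨ 4 ∣ n i) {u : ℕ → ℝ}
    (hu : CompletelyMonotoneSeq fun k ↦ u (k + 1)) {χ ψ : AddChar (∀ i, ZMod (n i)) ℂ}
    (hχ : ∀ i, coordChar χ i 1 = -1) (hψ : ψ ≠ χ) :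
    eigenvalue (leeKernel u) χ < eigenvalue (leeKernel u) ψ := by
  have hnorm {x : ∀ i, ZMod (n i)} (hx : x ∈ Finset.univ.erase 0) : leeNorm x - 1 + 1 = leeNorm x :=
    Nat.sub_add_cancel (leeNorm_pos (Finset.ne_of_mem_erase hx))
  have hpos := sum_mul_pos_of_completelyMonotoneSeq hu (Finset.univ.erase 0)
    (fun x ↦ (ψ x).re - (χ x).re) (fun x ↦ leeNorm x - 1) fun r hr ↦ by
      have hlt := sub_pos.mpr (eigenvalue_pow_leeNorm_lt hn hr hχ hψ)
      rw [eigenvalue_sub_eigenvalue] at hlt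
      refine pos_of_mul_pos_left (hlt.trans_eq ?_) hr.1.le
      rw [Finset.sum_mul]
      exact Finset.sum_congr rfl fun x hx ↦ by rw [mul_assoc, ← pow_succ, hnorm hx]
  rw [← sub_pos, eigenvalue_sub_eigenvalue]
  refine hpos.trans_eq (Finset.sum_congr rfl fun x hx ↦ ?_)
  rw [hnorm hx, leeKernel, if_neg (Finset.ne_of_mem_erase hx)]

end Torus

section Checkerboards

variable {ι : Type*} [Fintype ι] {n : ι → ℕ}

/-- The energy felt by the point `h` when the other points of `S` interact through the potential
`u` of the Lee distance. The total and the maximal energy of `S` are the sum and the maximum of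
`siteEnergy u S h` over `h ∈ S`. -/
def siteEnergy (u : ℕ → ℝ) (S : Finset (∀ i, ZMod (n i))) (h : ∀ i, ZMod (n i)) : ℝ :=
  ∑ g ∈ S.erase h, u (leeNorm (g - h))

lemma siteEnergy_eq_pointEnergy (u : ℕ → ℝ) {S : Finset (∀ i, ZMod (n i))} {h : ∀ i, ZMod (n i)}
    (hh : h ∈ S) : siteEnergy u S h = pointEnergy (leeKernel u) S h := by
  rw [pointEnergy, ← Finset.add_sum_erase S _ hh, sub_self, leeKernel, if_pos rfl, zero_add]
  exact Finset.sum_congr rfl fun g hg ↦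
    (if_neg (sub_ne_zero.mpr (Finset.ne_of_mem_erase hg))).symm

variable [∀ i, NeZero (n i)]

lemma parityChar_ne_zero [Nonempty ι] (hn : ∀ i, Even (n i)) : parityChar hn ≠ 0 := by
  classical
  obtain ⟨i⟩ := ‹Nonempty ι›
  intro h
  have hneg := parityChar_single_one hn i
  rw [h, AddChar.zero_apply] at hneg
  norm_num at hneg

variable [DecidableEq ι]

variable (n) in
/-- The points of the torus with even coordinate sum. -/
def evenCheckerboard : Finset (∀ i, ZMod (n i)) :=
  Finset.univ.filter fun g ↦ (∑ i, (g i).val) % 2 = 0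

variable (n) in
/-- The points of the torus with odd coordinate sum. -/
def oddCheckerboard : Finset (∀ i, ZMod (n i)) :=
  Finset.univ.filter fun g ↦ (∑ i, (g i).val) % 2 = 1

lemma isLevelSet_parityChar_iff (hn : ∀ i, Even (n i)) {S : Finset (∀ i, ZMod (n i))} :
    IsLevelSet (parityChar hn) S ↔ S = evenCheckerboard n ∨ S = oddCheckerboard n := by
  have heven (g : ∀ i, ZMod (n i)) : parityChar hn g = 1 ↔ (∑ i, (g i).val) % 2 = 0 := by
    rw [← Nat.even_iff, ← neg_one_pow_eq_one_iff_even (R := ℝ) (by norm_num)]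
    rfl
  have hodd (g : ∀ i, ZMod (n i)) : parityChar hn g = -1 ↔ (∑ i, (g i).val) % 2 = 1 := by
    rw [← Nat.odd_iff, ← neg_one_pow_eq_neg_one_iff_odd (R := ℝ) (by norm_num)]
    rfl
  simp [IsLevelSet, Finset.ext_iff, evenCheckerboard, oddCheckerboard, heven, hodd]

lemma two_mul_card_evenCheckerboard [Nonempty ι] (hn : ∀ i, Even (n i)) :
    2 * (evenCheckerboard n).card = Fintype.card (∀ i, ZMod (n i)) :=
  two_mul_card_of_isLevelSet (parityChar_ne_zero hn) ((isLevelSet_parityChar_iff hn).mpr (.inl rfl))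

lemma two_mul_card_of_card_eq_half [Nonempty ι] (hn : ∀ i, Even (n i))
    {S : Finset (∀ i, ZMod (n i))} (hS : S.card = Fintype.card (∀ i, ZMod (n i)) / 2) :
    2 * S.card = Fintype.card (∀ i, ZMod (n i)) := by
  have := two_mul_card_evenCheckerboard hn
  omega

variable [Nonempty ι] {u : ℕ → ℝ} {S : Finset (∀ i, ZMod (n i))}

theorem sum_siteEnergy_evenCheckerboard_le_and_eq_iff (hn : ∀ i, n i = 2 ∨ 4 ∣ n i)
    (hu : CompletelyMonotoneSeq fun k ↦ u (k + 1))
    (hS : S.card = Fintype.card (∀ i, ZMod (n i)) / 2) :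
    ∑ h ∈ evenCheckerboard n, siteEnergy u (evenCheckerboard n) h ≤ ∑ h ∈ S, siteEnergy u S h ∧
      (∑ h ∈ S, siteEnergy u S h =
          ∑ h ∈ evenCheckerboard n, siteEnergy u (evenCheckerboard n) h ↔
        S = evenCheckerboard n ∨ S = oddCheckerboard n) := by
  have heven (i : ι) : Even (n i) := even_of_eq_two_or_four_dvd (hn i)
  have hlt := fun ψ ↦ eigenvalue_leeKernel_lt hn hu (ψ := ψ) (coordChar_parityChar_one heven)
  have hcard := two_mul_card_of_card_eq_half heven hS
  have hcardEven := two_mul_card_evenCheckerboard heven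
  have hsum (T : Finset (∀ i, ZMod (n i))) :
      ∑ h ∈ T, siteEnergy u T h = ∑ h ∈ T, pointEnergy (leeKernel u) T h :=
    Finset.sum_congr rfl fun _ ↦ siteEnergy_eq_pointEnergy u
  have hevenSum := (sum_pointEnergy_eq_iff_isLevelSet hlt hcardEven).mpr
    ((isLevelSet_parityChar_iff heven).mpr (.inl rfl))
  have hsame : (evenCheckerboard n).card = S.card := by omega
  rw [hsum, hsum, hevenSum, hsame]
  exact ⟨card_mul_kernelSum_le_sum_pointEnergy (eigenvalue_le_of_forall_ne_lt hlt) hcard,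
    (sum_pointEnergy_eq_iff_isLevelSet hlt hcard).trans (isLevelSet_parityChar_iff heven)⟩

theorem sup'_siteEnergy_evenCheckerboard_le_and_eq_iff (hn : ∀ i, n i = 2 ∨ 4 ∣ n i)
    (hu : CompletelyMonotoneSeq fun k ↦ u (k + 1))
    (hS : S.card = Fintype.card (∀ i, ZMod (n i)) / 2) (hne : S.Nonempty)
    (hneEven : (evenCheckerboard n).Nonempty) :
    (evenCheckerboard n).sup' hneEven (siteEnergy u (evenCheckerboard n)) ≤
        S.sup' hne (siteEnergy u S) ∧
      (S.sup' hne (siteEnergy u S) =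
          (evenCheckerboard n).sup' hneEven (siteEnergy u (evenCheckerboard n)) ↔
        S = evenCheckerboard n ∨ S = oddCheckerboard n) := by
  have heven (i : ι) : Even (n i) := even_of_eq_two_or_four_dvd (hn i)
  have hlt := fun ψ ↦ eigenvalue_leeKernel_lt hn hu (ψ := ψ) (coordChar_parityChar_one heven)
  have hcard := two_mul_card_of_card_eq_half heven hS
  have hsup {T : Finset (∀ i, ZMod (n i))} (hT : T.Nonempty) :
      T.sup' hT (siteEnergy u T) = T.sup' hT (pointEnergy (leeKernel u) T) :=
    Finset.sup'_congr hT rfl fun _ ↦ siteEnergy_eq_pointEnergy u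
  have hevenSup := (sup'_pointEnergy_eq_iff_isLevelSet hlt (two_mul_card_evenCheckerboard heven)
    hneEven).mpr ((isLevelSet_parityChar_iff heven).mpr (.inl rfl))
  rw [hsup, hsup, hevenSup]
  exact ⟨kernelSum_le_sup'_pointEnergy (eigenvalue_le_of_forall_ne_lt hlt) hcard hne,
    (sup'_pointEnergy_eq_iff_isLevelSet hlt hcard hne).trans (isLevelSet_parityChar_iff heven)⟩

end Checkerboards

end Checkerboard

theorem toric_checkerboard_minimises_general {ι : Type*} [Fintype ι] [DecidableEq ι] [Nonempty ι]
    (n : ι → ℕ) [∀ i, NeZero (n i)] (hn : ∀ i, n i = 2 ∨ 4 ∣ n i) {u : ℕ → ℝ}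
    (hu : Checkerboard.CompletelyMonotoneSeq fun k ↦ u (k + 1)) :
    let E := Checkerboard.siteEnergy (n := n) u
    let Se := Checkerboard.evenCheckerboard n
    let So := Checkerboard.oddCheckerboard n
    (∀ S : Finset (∀ i, ZMod (n i)), S.card = Fintype.card (∀ i, ZMod (n i)) / 2 →
      ∑ h ∈ Se, E Se h ≤ ∑ h ∈ S, E S h ∧
        (∑ h ∈ S, E S h = ∑ h ∈ Se, E Se h ↔ S = Se ∨ S = So)) ∧
    (∀ S : Finset (∀ i, ZMod (n i)), S.card = Fintype.card (∀ i, ZMod (n i)) / 2 →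
      ∀ (hS : S.Nonempty) (hSe : Se.Nonempty), Se.sup' hSe (E Se) ≤ S.sup' hS (E S) ∧
        (S.sup' hS (E S) = Se.sup' hSe (E Se) ↔ S = Se ∨ S = So)) :=
  ⟨fun _ ↦ Checkerboard.sum_siteEnergy_evenCheckerboard_le_and_eq_iff hn hu,
    fun _ ↦ Checkerboard.sup'_siteEnergy_evenCheckerboard_le_and_eq_iff hn hu⟩

theorem toric_checkerboard_minimises (d : ℕ) (hd : 0 < d) (n : Fin d → ℕ)
    [∀ i, NeZero (n i)] (hn : ∀ i, n i = 2 ∨ 4 ∣ n i)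
    (f : ℝ → ℝ) (hf : CompletelyMonotonic f) :
    let G := ∀ i, ZMod (n i)
    let δ : G → G → ℕ := fun g h => ∑ i, min ((g i - h i).val) (n i - (g i - h i).val)
    let Se : Finset G := Finset.univ.filter (fun g => (∑ i, (g i).val) % 2 = 0)
    let So : Finset G := Finset.univ.filter (fun g => (∑ i, (g i).val) % 2 = 1)
    let Etot : Finset G → ℝ := fun S => ∑ h ∈ S, ∑ g ∈ S.erase h, f (δ g h)
    (∀ S : Finset G, S.card = Fintype.card G / 2 →
      Etot Se ≤ Etot S ∧ (Etot S = Etot Se ↔ S = Se ∨ S = So)) ∧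
    (∀ S : Finset G, S.card = Fintype.card G / 2 →
      ∀ (hS : S.Nonempty) (hSe : Se.Nonempty),
        Se.sup' hSe (fun h => ∑ g ∈ Se.erase h, f (δ g h)) ≤
          S.sup' hS (fun h => ∑ g ∈ S.erase h, f (δ g h)) ∧
        (S.sup' hS (fun h => ∑ g ∈ S.erase h, f (δ g h)) =
            Se.sup' hSe (fun h => ∑ g ∈ Se.erase h, f (δ g h)) ↔ S = Se ∨ S = So)) := by
  have : Nonempty (Fin d) := ⟨⟨0, hd⟩⟩
  exact toric_checkerboard_minimises_general n hn (u := fun k ↦ f k)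
    (Checkerboard.completelyMonotoneSeq_of_completelyMonotonic hf)
end
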